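/- arXiv:2210.03545 — 2 statements merged into one kernel-verified Lean document; each statement's English description precedes it below -/
import Mathlib

section
/- There is a constant c > 0 and, for each pair of integers a ≥ b ≥ 2, a constant c'_a > 0 such that for all sufficiently large n: 2^{c·(log n)²} ≤ gr(Γ_{a,b}, K_n) ≤ 2^{c'_a·n^{1 − 1/(2^b − 1)}·log n}. -/
/-- Adjacency in the grid graph `K_m □ K_n`. -/
def GridAdj {m n : ℕ} (p q : Fin m × Fin n) : Prop :=
  (p.1 = q.1 ∧ p.2 ≠ q.2) ∨ (p.1 ≠ q.1 ∧ p.2 = q.2)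

/-- A red copy of `Γ_{a,b}` in an edge-coloring of `Γ_{N,N}`: a set `A` of `a` columns
and a set `B` of `b` rows such that all grid edges among the corresponding `a·b`
vertices are red (red = `true`). -/
def HasRedSubgrid (N a b : ℕ) (χ : Sym2 (Fin N × Fin N) → Bool) : Prop :=
  ∃ A B : Finset (Fin N), A.card = a ∧ B.card = b ∧
    (∀ x ∈ A, ∀ x' ∈ A, ∀ y ∈ B, x ≠ x' → χ s((x, y), (x', y)) = true) ∧
    (∀ x ∈ A, ∀ y ∈ B, ∀ y' ∈ B, y ≠ y' → χ s((x, y), (x, y')) = true)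

/-- A blue `K_n` in an edge-coloring of `Γ_{N,N}` (blue = `false`). -/
def HasBlueGridClique (N n : ℕ) (χ : Sym2 (Fin N × Fin N) → Bool) : Prop :=
  ∃ S : Finset (Fin N × Fin N), S.card = n ∧
    ∀ p ∈ S, ∀ q ∈ S, p ≠ q → GridAdj p q ∧ χ s(p, q) = false

/-- The grid Ramsey number `gr(Γ_{a,b}, K_n)`: the least `N` such that every red/blue
edge-coloring of `Γ_{N,N}` contains a red `Γ_{a,b}` or a blue `K_n`. -/
noncomputable def gridRamsey (a b n : ℕ) : ℕ :=
  sInf {N : ℕ | ∀ χ : Sym2 (Fin N × Fin N) → Bool,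
    HasRedSubgrid N a b χ ∨ HasBlueGridClique N n χ}

/-!
Split a coloring into the red graphs `R y` of the rows and `C x` of the columns; a blue clique is an
independent set of one of them.

Upper bound. Let `k ≈ n^(1/(b+1))` and suppose there is no blue `K_n` and no red `Γ_{a,b}`. Every
column has a red clique on `k` among `n^k` fixed rows, and by pigeonhole many columns share one such
set `K` of rows. Any `b` rows of `K` then meet in a `K_a`-free graph, so passing to neighborhoods
makes all these intersections sparse. The rows of `K` are now almost disjoint up to multiplicity
`b`, so one of them is sparse, and a sparse graph without independent `n`-sets has a large vertex
set without independent `s`-sets, where `s ≈ n / k ≈ k^b`. Repeating this for `b` rows leaves a set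
of columns on which these rows have no independent `s`-sets while their intersection is `K_a`-free.
The `(b+1)`-color Ramsey theorem bounds its size by `(b+1)^(a + b s)`.

Lower bound. Take a prime `p ≈ n^(1/4)` and `k ≈ log p`. Index the columns by words `F x ∈ 𝔽_p^p`
any two of which agree in at most `k` coordinates (polynomials of degree less than `k`), and the
rows by distinct binary words `v y` of length `p`. Random labels on the edges of the two factors
decide which edges are red, so that no two rows and two columns are joined by four red edges, while
every edge is red with probability at least `2^(-k)` or `1 / p`. Such random graphs have no
independent `n`-set for `N = 2^(k²)`.
-/

namespace GridRamsey

open Finset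
open scoped Classical

section Ramsey

variable {α : Type*} {G : SimpleGraph α} {U : Finset α}

lemma cliqueFreeOn_compl {s : Set α} {n : ℕ} :
    Gᶜ.CliqueFreeOn s n ↔ G.IndepSetFreeOn s n := by
  simp [SimpleGraph.CliqueFreeOn, SimpleGraph.IndepSetFreeOn]

lemma indepSetFreeOn_of_card_lt {n : ℕ} (hU : #U < n) : G.IndepSetFreeOn U n :=
  cliqueFreeOn_compl.mp (SimpleGraph.cliqueFreeOn_of_card_lt _ hU)

lemma card_lt_of_indepSetFreeOn {n : ℕ} (hU : G.IndepSetFreeOn U n) {I : Finset α} (hIU : I ⊆ U)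
    (hI : G.IsIndepSet I) : #I < n := by
  by_contra! hn
  obtain ⟨J, hJI, hJ⟩ := exists_subset_card_eq hn
  exact hU (coe_subset.mpr (hJI.trans hIU)) ⟨hI.mono (coe_subset.mpr hJI), hJ⟩

lemma exists_maximum_isIndepSet (G : SimpleGraph α) (U : Finset α) :
    ∃ I ⊆ U, G.IsIndepSet I ∧ ∀ J ⊆ U, G.IsIndepSet J → #J ≤ #I := by
  obtain ⟨I, hI, hmax⟩ := exists_max_image
    (U.powerset.filter fun I : Finset α => G.IsIndepSet I) card
    ⟨∅, by simp [SimpleGraph.isIndepSet_iff]⟩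
  simp only [mem_filter, mem_powerset] at hI hmax
  exact ⟨I, hI.1, hI.2, fun J hJU hJ => hmax J ⟨hJU, hJ⟩⟩

lemma ne_zero_of_cliqueFreeOn {s : Set α} {k : ℕ} (hs : G.CliqueFreeOn s k) : k ≠ 0 :=
  (SimpleGraph.cliqueFreeOn_empty G).mp (hs.subset _ (Set.empty_subset _))

lemma cliqueFreeOn_filter_adj {k : ℕ} (hU : G.CliqueFreeOn U (k + 1)) {x : α} (hx : x ∈ U) :
    G.CliqueFreeOn (({y ∈ U | G.Adj x y} : Finset α) : Set α) k :=
  (hU.of_succ _ (mem_coe.mpr hx)).subset _ fun y hy => by simpa using hy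

lemma cliqueFreeOn_update_filter_adj {ι : Type*} {H : ι → SimpleGraph α} {𝓘 : Finset ι} {t : ι → ℕ}
    (hU : ∀ j ∈ 𝓘, (H j).CliqueFreeOn U (t j)) {i : ι} (hi : i ∈ 𝓘) {x : α} (hx : x ∈ U) :
    ∀ j ∈ 𝓘, (H j).CliqueFreeOn (({y ∈ U | (H i).Adj x y} : Finset α) : Set α)
      (Function.update t i (t i - 1) j) := by
  intro j hj
  obtain rfl | hji := eq_or_ne j i
  · have hpos : t j ≠ 0 := ne_zero_of_cliqueFreeOn (hU j hi)
    rw [Function.update_self]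
    exact cliqueFreeOn_filter_adj (by rw [Nat.sub_add_cancel (by omega)]; exact hU j hi) hx
  · rw [Function.update_of_ne hji]
    exact (hU j hj).subset _ (coe_subset.mpr (filter_subset _ _))

lemma sum_update_sub_one {ι : Type*} {𝓘 : Finset ι} {t : ι → ℕ} {i : ι} (hi : i ∈ 𝓘)
    (ht : t i ≠ 0) : ∑ j ∈ 𝓘, Function.update t i (t i - 1) j = ∑ j ∈ 𝓘, t j - 1 := by
  rw [sum_update_of_mem hi, sdiff_singleton_eq_erase, ← add_sum_erase _ t hi]
  omega

lemma card_lt_pow_of_cliqueFreeOn_of_indepSetFreeOn {n k : ℕ} (hclique : G.CliqueFreeOn U k)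
    (hindep : G.IndepSetFreeOn U n) : #U < n ^ k := by
  induction k generalizing U with
  | zero => exact absurd rfl (ne_zero_of_cliqueFreeOn hclique)
  | succ k ih =>
    obtain ⟨I, hIU, hI, hmax⟩ := exists_maximum_isIndepSet G U
    have hIn : #I < n := card_lt_of_indepSetFreeOn hindep hIU hI
    have hdom : U ⊆ I.biUnion fun v => insert v {w ∈ U | G.Adj v w} := by
      intro w hw
      by_contra hfar
      simp only [mem_biUnion, mem_insert, mem_filter, not_exists, not_and, not_or] at hfar
      have hwI : w ∉ I := fun h => (hfar w h).1 rfl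
      have hins : G.IsIndepSet (insert w I : Finset α) := by
        rw [coe_insert]
        exact hI.insert fun v hv _ => ⟨fun h => (hfar v hv).2 hw h.symm, (hfar v hv).2 hw⟩
      have := hmax _ (insert_subset hw hIU) hins
      rw [card_insert_of_notMem hwI] at this
      omega
    have hnbhd : ∀ v ∈ I, #(insert v {w ∈ U | G.Adj v w}) ≤ n ^ k := by
      intro v hv
      exact (card_insert_le _ _).trans (ih (cliqueFreeOn_filter_adj hclique (hIU hv))
        fun t ht => hindep (ht.trans (coe_subset.mpr (filter_subset _ _))))
    calc #U ≤ #I * n ^ k := (card_le_card hdom).trans (card_biUnion_le_card_mul _ _ _ hnbhd)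
      _ < n * n ^ k := by gcongr; exact Nat.pow_pos (by omega)
      _ = n ^ (k + 1) := (pow_succ' n k).symm

lemma card_lt_pow_sum_of_cliqueFreeOn {ι : Type*} [Fintype ι] (hι : 2 ≤ Fintype.card ι)
    (H : ι → SimpleGraph α) (t : ι → ℕ) (hfree : ∀ i, (H i).CliqueFreeOn U (t i))
    (hcover : (U : Set α).Pairwise fun x y => ∃ i, (H i).Adj x y) :
    #U < Fintype.card ι ^ ∑ i, t i := by
  obtain ⟨w, hw⟩ : ∃ w, ∑ i, t i = w := ⟨_, rfl⟩
  induction w generalizing U t with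
  | zero =>
    obtain ⟨i⟩ : Nonempty ι := Fintype.card_pos_iff.mp (by omega)
    have hti : t i = 0 := (sum_eq_zero_iff.mp hw) i (mem_univ i)
    exact absurd hti (ne_zero_of_cliqueFreeOn (hfree i))
  | succ w ih =>
    obtain rfl | ⟨x, hx⟩ := U.eq_empty_or_nonempty
    · simpa using Nat.pow_pos (by omega)
    have hnbhd : ∀ i ∈ univ, #{y ∈ U | (H i).Adj x y} ≤ Fintype.card ι ^ w - 1 := by
      intro i _
      have hsum : ∑ j, Function.update t i (t i - 1) j = w := by
        rw [sum_update_sub_one (mem_univ i) (ne_zero_of_cliqueFreeOn (hfree i)), hw,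
          Nat.add_sub_cancel]
      have := ih (Function.update t i (t i - 1))
        (fun j => cliqueFreeOn_update_filter_adj (fun j' _ => hfree j') (mem_univ i) hx j
          (mem_univ j))
        (hcover.mono (coe_subset.mpr (filter_subset _ _))) hsum
      rw [hsum] at this
      omega
    have hcov : U ⊆ insert x (univ.biUnion fun i => {y ∈ U | (H i).Adj x y}) := by
      intro y hy
      obtain rfl | hxy := eq_or_ne x y
      · exact mem_insert_self _ _
      · simpa [hy] using Or.inr (hcover hx hy hxy)
    have hcard : #U ≤ Fintype.card ι * (Fintype.card ι ^ w - 1) + 1 :=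
      (card_le_card hcov).trans <| (card_insert_le _ _).trans <| by
        simpa using card_biUnion_le_card_mul _ _ _ hnbhd
    have hpow : 0 < Fintype.card ι ^ w := Nat.pow_pos (by omega)
    rw [hw, pow_succ']
    rw [Nat.mul_sub_one] at hcard
    have := Nat.mul_le_mul_left (Fintype.card ι) hpow
    omega

end Ramsey

section Sparse

variable {α : Type*} {G : SimpleGraph α}

lemma card_powerset_filter_card_lt_le (A : Finset α) (s : ℕ) :
    #{J ∈ A.powerset | #J < s} ≤ (#A + 1) ^ s := by
  have hunion : {J ∈ A.powerset | #J < s} ⊆ (range s).biUnion A.powersetCard := by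
    intro J hJ
    simpa [and_comm] using hJ
  calc #{J ∈ A.powerset | #J < s}
      ≤ ∑ i ∈ range s, (#A).choose i := by
        simpa only [card_powersetCard] using (card_le_card hunion).trans card_biUnion_le
    _ ≤ ∑ i ∈ range (s + 1), #A ^ i * 1 ^ (s - i) * s.choose i := by
        rw [sum_range_succ]
        refine le_add_right (sum_le_sum fun i hi => ?_)
        rw [one_pow, mul_one]
        exact (Nat.choose_le_pow _ _).trans
          (Nat.le_mul_of_pos_right _ (Nat.choose_pos (mem_range.mp hi).le))
    _ = (#A + 1) ^ s := by simpa using (add_pow (#A) 1 s).symm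

lemma exists_card_le_card_mul_card_fiber {β : Type*} {f : α → β} {V : Finset α} {T : Finset β}
    (hT : T.Nonempty) (hf : ∀ v ∈ V, f v ∈ T) : ∃ J ∈ T, #V ≤ #T * #{v ∈ V | f v = J} := by
  obtain ⟨J, hJT, hJ⟩ := exists_max_image T (fun J => #{v ∈ V | f v = J}) hT
  exact ⟨J, hJT, by simpa [mul_comm] using card_le_mul_card_image_of_maps_to hf _ hJ⟩

lemma card_le_card_of_adj_imp_mem {L A J I : Finset α} (hAL : A ⊆ L) (hA : G.IsIndepSet A)
    (hmax : ∀ B ⊆ L, G.IsIndepSet B → #B ≤ #A) (hJA : J ⊆ A) (hIL : I ⊆ L \ A)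
    (hI : G.IsIndepSet I) (hIJ : ∀ v ∈ I, ∀ w ∈ A, G.Adj v w → w ∈ J) : #I ≤ #J := by
  have hdisj : Disjoint (A \ J) I :=
    disjoint_left.mpr fun v hv hvI => (mem_sdiff.mp (hIL hvI)).2 (mem_sdiff.mp hv).1
  have hindep : G.IsIndepSet ((A \ J ∪ I : Finset α) : Set α) := by
    rw [coe_union]
    refine Set.pairwise_union.mpr ⟨hA.mono (coe_subset.mpr sdiff_subset), hI, fun v hv w hw _ => ?_⟩
    obtain ⟨hvA, hvJ⟩ := mem_sdiff.mp (mem_coe.mp hv)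
    have hvw : ¬ G.Adj w v := fun h => hvJ (hIJ w (mem_coe.mp hw) v hvA h)
    exact ⟨fun h => hvw h.symm, hvw⟩
  have hcard := hmax _ (union_subset (sdiff_subset.trans hAL) (hIL.trans sdiff_subset)) hindep
  rw [card_union_of_disjoint hdisj, card_sdiff_of_subset hJA] at hcard
  have := card_le_card hJA
  omega

lemma exists_indepSetFreeOn_of_few_neighbors {L A V : Finset α} {n s : ℕ} (hs : 0 < s)
    (hAL : A ⊆ L) (hA : G.IsIndepSet A) (hmax : ∀ B ⊆ L, G.IsIndepSet B → #B ≤ #A) (hAn : #A < n)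
    (hVL : V ⊆ L \ A) (hV : ∀ v ∈ V, #{w ∈ A | G.Adj v w} < s) :
    ∃ W ⊆ V, #V ≤ n ^ s * #W ∧ G.IndepSetFreeOn W s := by
  obtain ⟨J, hJ, hcard⟩ := exists_card_le_card_mul_card_fiber
    (f := fun v => {w ∈ A | G.Adj v w}) (V := V) (T := {J ∈ A.powerset | #J < s})
    ⟨∅, by simpa using hs⟩ fun v hv => by simpa using hV v hv
  obtain ⟨hJA, hJs⟩ : J ⊆ A ∧ #J < s := by simpa using hJ
  refine ⟨{v ∈ V | ({w ∈ A | G.Adj v w} : Finset α) = J}, filter_subset _ _,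
    hcard.trans ?_, fun I hIW hI => ?_⟩
  · gcongr
    exact (card_powerset_filter_card_lt_le A s).trans (Nat.pow_le_pow_left hAn s)
  · refine (hI.card_eq ▸ hJs).not_ge (card_le_card_of_adj_imp_mem hAL hA hmax hJA
      (fun v hv => hVL (mem_filter.mp (hIW hv)).1) hI.isIndepSet fun v hv w hw hvw => ?_)
    rw [← (mem_filter.mp (hIW hv)).2]
    exact mem_filter.mpr ⟨hw, hvw⟩

lemma four_mul_card_high_degree_le {V : Finset α} {n s : ℕ} (hs : 0 < s)
    (hsparse : 16 * n * ∑ v ∈ V, #{w ∈ V | G.Adj v w} ≤ s * #V ^ 2) :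
    4 * #{v ∈ V | s * #V < 4 * n * #{w ∈ V | G.Adj v w}} ≤ #V := by
  obtain rfl | hV := V.eq_empty_or_nonempty
  · simp
  set T := {v ∈ V | s * #V < 4 * n * #{w ∈ V | G.Adj v w}}
  have hmarkov : #T * (s * #V) ≤ 4 * n * ∑ v ∈ V, #{w ∈ V | G.Adj v w} :=
    calc #T * (s * #V) ≤ ∑ v ∈ T, 4 * n * #{w ∈ V | G.Adj v w} :=
          card_nsmul_le_sum _ _ _ fun v hv => (mem_filter.mp hv).2.le
      _ ≤ _ := by
          rw [mul_sum]
          exact sum_le_sum_of_subset (filter_subset _ _)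
  refine Nat.le_of_mul_le_mul_right (c := s * #V) ?_ (Nat.mul_pos hs hV.card_pos)
  nlinarith

lemma four_mul_card_many_neighbors_le {V A : Finset α} {n s : ℕ} (hs : 0 < s)
    (hAn : #A < n) (hlow : ∀ w ∈ A, 4 * n * #{v ∈ V | G.Adj w v} ≤ s * #V) :
    4 * #{v ∈ V | s ≤ #{w ∈ A | G.Adj v w}} ≤ #V := by
  set T := {v ∈ V | s ≤ #{w ∈ A | G.Adj v w}}
  have hcount : #T * s ≤ ∑ w ∈ A, #{v ∈ V | G.Adj w v} :=
    calc #T * s ≤ ∑ v ∈ T, #{w ∈ A | G.Adj v w} :=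
          card_nsmul_le_sum _ _ _ fun v hv => (mem_filter.mp hv).2
      _ ≤ ∑ v ∈ V, #{w ∈ A | G.Adj v w} := sum_le_sum_of_subset (filter_subset _ _)
      _ = ∑ w ∈ A, #{v ∈ V | G.Adj w v} := by
          exact (sum_card_bipartiteAbove_eq_sum_card_bipartiteBelow G.Adj).trans <|
            sum_congr rfl fun w _ => congrArg card (filter_congr fun v _ => G.adj_comm v w)
  have hlow' : 4 * n * (#T * s) ≤ n * (s * #V) :=
    calc 4 * n * (#T * s) ≤ ∑ w ∈ A, 4 * n * #{v ∈ V | G.Adj w v} := by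
          rw [← mul_sum]; gcongr
      _ ≤ #A * (s * #V) := sum_le_card_nsmul _ _ _ hlow
      _ ≤ n * (s * #V) := by gcongr
  refine Nat.le_of_mul_le_mul_left (c := n * s) ?_ (Nat.mul_pos (by omega) hs)
  nlinarith

/- `W` is a class of vertices having the same neighbors in a maximum independent set `A` of
low-degree vertices: such a vertex typically has fewer than `s` neighbors in `A`, so an independent
`s`-subset of `W` could replace them and enlarge `A`. -/
lemma exists_indepSetFreeOn_of_sparse {V : Finset α} {n s : ℕ} (hs : 2 ≤ s)
    (hV : G.IndepSetFreeOn V n)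
    (hsparse : 16 * n * ∑ v ∈ V, #{w ∈ V | G.Adj v w} ≤ s * #V ^ 2) :
    ∃ W ⊆ V, #V ≤ 4 * n ^ s * #W ∧ G.IndepSetFreeOn W s := by
  obtain hsmall | hlarge := lt_or_ge #V (4 * n)
  · obtain ⟨W, hWV, hW⟩ := exists_subset_card_eq (min_le_right 1 #V)
    refine ⟨W, hWV, ?_, indepSetFreeOn_of_card_lt (by omega)⟩
    have : n ≤ n ^ s := Nat.le_self_pow (by omega) n
    obtain h | h := Nat.eq_zero_or_pos #V
    · omega
    · rw [hW, min_eq_left h]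
      omega
  set high := {v ∈ V | s * #V < 4 * n * #{w ∈ V | G.Adj v w}}
  obtain ⟨A, hAL, hA, hmax⟩ := exists_maximum_isIndepSet G (V \ high)
  have hAV : A ⊆ V := hAL.trans sdiff_subset
  have hAn : #A < n := card_lt_of_indepSetFreeOn hV hAV hA
  have hlow : ∀ w ∈ A, 4 * n * #{v ∈ V | G.Adj w v} ≤ s * #V := fun w hw => by
    simpa [high, hAV hw] using (mem_sdiff.mp (hAL hw)).2
  set many := {v ∈ V | s ≤ #{w ∈ A | G.Adj v w}}
  have hhigh : 4 * #high ≤ #V := four_mul_card_high_degree_le (by omega) hsparse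
  have hmany : 4 * #many ≤ #V := four_mul_card_many_neighbors_le (by omega) hAn hlow
  obtain ⟨W, hW, hcard, hfree⟩ := exists_indepSetFreeOn_of_few_neighbors
    (V := ((V \ high) \ A) \ many) (s := s) (by omega) hAL hA hmax hAn sdiff_subset fun v hv => by
      simp only [mem_sdiff] at hv
      simpa [many, hv.1.1.1] using hv.2
  refine ⟨W, hW.trans (sdiff_subset.trans (sdiff_subset.trans sdiff_subset)), ?_, hfree⟩
  have h₁ := le_card_sdiff high V
  have h₂ := le_card_sdiff A (V \ high)
  have h₃ := le_card_sdiff many ((V \ high) \ A)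
  rw [mul_assoc]
  omega

end Sparse

section Rows

variable {α β : Type*}

lemma exists_locally_sparse_subset {ι : Type*} (H : ι → SimpleGraph α) (𝓘 : Finset ι) (w : ι → ℕ)
    {X : ℕ} (hX : 0 < X) (U : Finset α) (hfree : ∀ i ∈ 𝓘, (H i).CliqueFreeOn U (w i)) :
    ∃ W ⊆ U, #U ≤ X ^ (∑ i ∈ 𝓘, w i) * #W ∧
      ∀ i ∈ 𝓘, ∀ x ∈ W, X * #{y ∈ W | (H i).Adj x y} ≤ #W := by
  obtain ⟨m, hm⟩ : ∃ m, ∑ i ∈ 𝓘, w i = m := ⟨_, rfl⟩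
  rw [hm]
  induction m generalizing U w with
  | zero =>
    have h𝓘 : 𝓘 = ∅ := eq_empty_of_forall_notMem fun i hi =>
      ne_zero_of_cliqueFreeOn (hfree i hi) (sum_eq_zero_iff.mp hm i hi)
    exact ⟨U, Subset.rfl, by simp, by simp [h𝓘]⟩
  | succ m ih =>
    by_cases hsparse : ∀ i ∈ 𝓘, ∀ x ∈ U, X * #{y ∈ U | (H i).Adj x y} ≤ #U
    · exact ⟨U, Subset.rfl, Nat.le_mul_of_pos_left _ (Nat.pow_pos hX), hsparse⟩
    push Not at hsparse
    obtain ⟨i, hi, x, hx, hdense⟩ := hsparse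
    obtain ⟨W, hW, hcard, hWsparse⟩ := ih (Function.update w i (w i - 1))
      {y ∈ U | (H i).Adj x y} (cliqueFreeOn_update_filter_adj hfree hi hx) (by
        rw [sum_update_sub_one hi (ne_zero_of_cliqueFreeOn (hfree i hi)), hm, Nat.add_sub_cancel])
    refine ⟨W, hW.trans (filter_subset _ _), ?_, hWsparse⟩
    calc #U ≤ X * #{y ∈ U | (H i).Adj x y} := hdense.le
      _ ≤ X * (X ^ m * #W) := by gcongr
      _ = X ^ (m + 1) * #W := by ring

lemma finset_inf_adj (R : β → SimpleGraph α) (B : Finset β) (x y : α) :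
    (B.inf R).Adj x y ↔ (∀ i ∈ B, (R i).Adj x y) ∧ x ≠ y := by
  simp only [Finset.inf_eq_iInf, SimpleGraph.iInf_adj]
  aesop

lemma sum_card_adj_le {R : β → SimpleGraph α} {K : Finset β} {U : Finset α} {b : ℕ} {x : α}
    (hb : 0 < b) (hbK : b ≤ #K)
    (hsparse : ∀ B ∈ K.powersetCard b,
      #K * (#K).choose b * #{x' ∈ U | (B.inf R).Adj x x'} ≤ #U) :
    ∑ y ∈ K, #{x' ∈ U | (R y).Adj x x'} ≤ b * #U := by
  set heavy := {x' ∈ U | b ≤ #{y ∈ K | (R y).Adj x x'}}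
  have hheavy : heavy ⊆ (K.powersetCard b).biUnion fun B => {x' ∈ U | (B.inf R).Adj x x'} := by
    intro x' hx'
    obtain ⟨hx'U, hbx'⟩ := mem_filter.mp hx'
    obtain ⟨B, hB, hBb⟩ := exists_subset_card_eq hbx'
    obtain ⟨y₀, hy₀⟩ := card_pos.mp (hBb ▸ hb)
    exact mem_biUnion.mpr ⟨B, mem_powersetCard.mpr ⟨hB.trans (filter_subset _ _), hBb⟩,
      mem_filter.mpr ⟨hx'U, (finset_inf_adj R B x x').mpr
        ⟨fun y hy => (mem_filter.mp (hB hy)).2, (mem_filter.mp (hB hy₀)).2.ne⟩⟩⟩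
  have hcard : #K * #heavy ≤ #U := by
    refine Nat.le_of_mul_le_mul_left (c := (#K).choose b) ?_ (Nat.choose_pos hbK)
    calc (#K).choose b * (#K * #heavy)
        ≤ (#K).choose b * (#K * ∑ B ∈ K.powersetCard b, #{x' ∈ U | (B.inf R).Adj x x'}) := by
          gcongr
          exact (card_le_card hheavy).trans card_biUnion_le
      _ = ∑ B ∈ K.powersetCard b, #K * (#K).choose b * #{x' ∈ U | (B.inf R).Adj x x'} := by
          rw [← mul_sum]; ring
      _ ≤ (#K).choose b * #U := by
          simpa using sum_le_card_nsmul _ _ _ hsparse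
  have hpoint : ∀ x' ∈ U, #{y ∈ K | (R y).Adj x x'} ≤
      (b - 1) + #K * if b ≤ #{y ∈ K | (R y).Adj x x'} then 1 else 0 := by
    intro x' _
    split_ifs with h
    · simpa using le_add_left (card_filter_le K _)
    · omega
  calc ∑ y ∈ K, #{x' ∈ U | (R y).Adj x x'}
      = ∑ x' ∈ U, #{y ∈ K | (R y).Adj x x'} :=
        sum_card_bipartiteAbove_eq_sum_card_bipartiteBelow fun y x' => (R y).Adj x x'
    _ ≤ (b - 1) * #U + #K * #heavy := by
        refine (sum_le_sum hpoint).trans_eq ?_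
        rw [sum_add_distrib, ← mul_sum, ← card_filter, sum_const, smul_eq_mul, mul_comm]
    _ ≤ (b - 1) * #U + #U := by gcongr
    _ = b * #U := by rw [← Nat.succ_mul, Nat.succ_eq_add_one, Nat.sub_add_cancel hb]

lemma exists_sparse_row {R : β → SimpleGraph α} {K F : Finset β} {U : Finset α} {b n s : ℕ}
    (hFK : F ⊂ K) (hs : 16 * n * b ≤ s * (#K - #F))
    (hsum : ∀ x ∈ U, ∑ y ∈ K, #{x' ∈ U | (R y).Adj x x'} ≤ b * #U) :
    ∃ y ∈ K \ F, 16 * n * ∑ x ∈ U, #{x' ∈ U | (R y).Adj x x'} ≤ s * #U ^ 2 := by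
  refine exists_le_of_sum_le (sdiff_nonempty.mpr hFK.2) ?_
  calc ∑ y ∈ K \ F, 16 * n * ∑ x ∈ U, #{x' ∈ U | (R y).Adj x x'}
      ≤ 16 * n * ∑ x ∈ U, ∑ y ∈ K, #{x' ∈ U | (R y).Adj x x'} := by
        rw [← mul_sum, sum_comm (s := U)]
        gcongr
        exact sdiff_subset
    _ ≤ 16 * n * (#U * (b * #U)) := by
        gcongr
        exact sum_le_card_nsmul _ _ _ hsum
    _ = 16 * n * b * #U ^ 2 := by ring
    _ ≤ s * (#K - #F) * #U ^ 2 := by gcongr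
    _ = ∑ y ∈ K \ F, s * #U ^ 2 := by
        rw [sum_const, card_sdiff_of_subset hFK.1, smul_eq_mul]; ring

lemma exists_indepSetFreeOn_rows {R : β → SimpleGraph α} {K : Finset β} {U : Finset α}
    {a b n s f : ℕ} (hb : 0 < b) (hbK : b < #K) (hs : 2 ≤ s) (hfb : f ≤ b)
    (hns : 16 * n * b ≤ s * (#K - b)) (hindep : ∀ y ∈ K, (R y).IndepSetFreeOn U n)
    (hclique : ∀ B ∈ K.powersetCard b, (B.inf R).CliqueFreeOn U a) :
    ∃ W ⊆ U, ∃ F ⊆ K, #F = f ∧ (∀ y ∈ F, (R y).IndepSetFreeOn W s) ∧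
      #U ≤ ((#K * (#K).choose b) ^ ((#K).choose b * a) * (4 * n ^ s)) ^ f * #W := by
  induction f with
  | zero => exact ⟨U, Subset.rfl, ∅, by simp⟩
  | succ f ih =>
    obtain ⟨W, hWU, F, hFK, hFf, hF, hcard⟩ := ih (by omega)
    obtain ⟨W', hW'W, hcard', hsparse⟩ := exists_locally_sparse_subset (fun B => B.inf R)
      (K.powersetCard b) (fun _ => a) (X := #K * (#K).choose b)
      (Nat.mul_pos (by omega) (Nat.choose_pos hbK.le)) W
      fun B hB => (hclique B hB).subset _ (coe_subset.mpr hWU)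
    obtain ⟨y, hy, hyW'⟩ := exists_sparse_row (F := F) (n := n) (s := s)
      ⟨hFK, fun h => by have := card_le_card h; omega⟩
      (hns.trans (Nat.mul_le_mul_left s (by omega)))
      fun x hx => sum_card_adj_le hb hbK.le fun B hB => hsparse B hB x hx
    obtain ⟨hyK, hyF⟩ := mem_sdiff.mp hy
    obtain ⟨W'', hW''W', hcard'', hyW''⟩ := exists_indepSetFreeOn_of_sparse hs
      (fun t ht => hindep y hyK (ht.trans (coe_subset.mpr (hW'W.trans hWU)))) hyW'
    refine ⟨W'', hW''W'.trans (hW'W.trans hWU), insert y F, insert_subset hyK hFK,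
      by rw [card_insert_of_notMem hyF, hFf], fun z hz => ?_, ?_⟩
    · obtain rfl | hz := mem_insert.mp hz
      · exact hyW''
      · exact fun t ht => hF z hz (ht.trans (coe_subset.mpr (hW''W'.trans hW'W)))
    · rw [sum_const, card_powersetCard, smul_eq_mul] at hcard'
      set X := (#K * (#K).choose b) ^ ((#K).choose b * a)
      calc #U ≤ (X * (4 * n ^ s)) ^ f * #W := hcard
        _ ≤ (X * (4 * n ^ s)) ^ f * (X * (4 * n ^ s * #W'')) := by
            gcongr
            exact hcard'.trans (Nat.mul_le_mul_left _ hcard'')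
        _ = (X * (4 * n ^ s)) ^ (f + 1) * #W'' := by ring

lemma card_lt_of_cliqueFreeOn_inf_of_indepSetFreeOn {R : β → SimpleGraph α} {F : Finset β}
    {W : Finset α} {a s : ℕ} (hF : F.Nonempty) (hclique : (F.inf R).CliqueFreeOn W a)
    (hindep : ∀ y ∈ F, (R y).IndepSetFreeOn W s) : #W < (#F + 1) ^ (a + #F * s) := by
  have hramsey := card_lt_pow_sum_of_cliqueFreeOn (U := W) (ι := Option F)
    (by simpa using hF)
    (fun i => i.elim (F.inf R) fun y => (R y)ᶜ) (fun i => i.elim a fun _ => s)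
    (fun i => by
      cases i with
      | none => exact hclique
      | some y => exact cliqueFreeOn_compl.mpr (hindep y y.2))
    fun x _ x' _ hxx' => by
      by_cases h : ∀ y ∈ F, (R y).Adj x x'
      · exact ⟨none, (finset_inf_adj R F x x').mpr ⟨h, hxx'⟩⟩
      · push Not at h
        obtain ⟨y, hy, hxy⟩ := h
        exact ⟨some ⟨y, hy⟩, hxx', hxy⟩
  simpa [Fintype.sum_option] using hramsey

theorem card_lt_of_cliqueFreeOn_inf {R : β → SimpleGraph α} {K : Finset β} {U : Finset α}
    {a b n s : ℕ} (hb : 0 < b) (hbK : b < #K) (hs : 2 ≤ s) (hns : 16 * n * b ≤ s * (#K - b))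
    (hindep : ∀ y ∈ K, (R y).IndepSetFreeOn U n)
    (hclique : ∀ B ∈ K.powersetCard b, (B.inf R).CliqueFreeOn U a) :
    #U < ((#K * (#K).choose b) ^ ((#K).choose b * a) * (4 * n ^ s)) ^ b *
      (b + 1) ^ (a + b * s) := by
  obtain ⟨W, hWU, F, hFK, rfl, hF, hcard⟩ :=
    exists_indepSetFreeOn_rows hb hbK hs le_rfl hns hindep hclique
  have hW := card_lt_of_cliqueFreeOn_inf_of_indepSetFreeOn (card_pos.mp hb)
    ((hclique F (mem_powersetCard.mpr ⟨hFK, rfl⟩)).subset _ (coe_subset.mpr hWU)) hF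
  obtain ⟨y, hy⟩ := card_pos.mp hb
  have hn : n ≠ 0 := ne_zero_of_cliqueFreeOn (cliqueFreeOn_compl.mpr (hindep y (hFK hy)))
  have hX : 0 < #K * (#K).choose #F := Nat.mul_pos (by omega) (Nat.choose_pos hbK.le)
  exact hcard.trans_lt (Nat.mul_lt_mul_of_pos_left hW (by positivity))

end Rows

section Grid

variable {α β : Type*}

lemma exists_card_le_forall_isClique {C : α → SimpleGraph β} {A : Finset α} {V : Finset β}
    {n k m : ℕ} (hA : A.Nonempty) (hV : n ^ k ≤ #V) (hC : ∀ x ∈ A, (C x).IndepSetFreeOn V n)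
    (hm : (#V).choose k * m ≤ #A) :
    ∃ K ⊆ V, #K = k ∧ ∃ U ⊆ A, m ≤ #U ∧ ∀ x ∈ U, (C x).IsClique K := by
  have hclique : ∀ x ∈ A, ∃ K ∈ V.powersetCard k, (C x).IsClique K := by
    intro x hx
    by_contra! hfree
    refine (card_lt_pow_of_cliqueFreeOn_of_indepSetFreeOn (G := C x) (U := V) (k := k)
      (fun K hKV hK => ?_) (hC x hx)).not_ge hV
    exact hfree K (mem_powersetCard.mpr ⟨coe_subset.mp hKV, hK.card_eq⟩) hK.isClique
  choose! f hfV hf using hclique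
  obtain ⟨K, hK, hcard⟩ := exists_le_card_fiber_of_mul_le_card_of_maps_to hfV
    ((hA.image f).mono (image_subset_iff.mpr hfV)) (by rwa [card_powersetCard])
  obtain ⟨hKV, hKk⟩ := mem_powersetCard.mp hK
  refine ⟨K, hKV, hKk, {x ∈ A | f x = K}, filter_subset _ _, hcard, fun x hx => ?_⟩
  obtain ⟨hxA, rfl⟩ := mem_filter.mp hx
  exact hf x hxA

theorem exists_clique_subgrid {R : β → SimpleGraph α} {C : α → SimpleGraph β} {A : Finset α}
    {V : Finset β} {a b n s k : ℕ} (hb : 0 < b) (hbk : b < k) (hs : 2 ≤ s)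
    (hns : 16 * n * b ≤ s * (k - b)) (hA : A.Nonempty) (hV : n ^ k ≤ #V)
    (hR : ∀ y ∈ V, (R y).IndepSetFreeOn A n) (hC : ∀ x ∈ A, (C x).IndepSetFreeOn V n)
    (hcard : (#V).choose k * (((k * k.choose b) ^ (k.choose b * a) * (4 * n ^ s)) ^ b *
      (b + 1) ^ (a + b * s)) ≤ #A) :
    ∃ A' ⊆ A, ∃ B ⊆ V, #A' = a ∧ #B = b ∧
      (∀ y ∈ B, (R y).IsClique A') ∧ ∀ x ∈ A', (C x).IsClique B := by
  obtain ⟨K, hKV, rfl, U, hUA, hU, hK⟩ := exists_card_le_forall_isClique hA hV hC hcard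
  by_contra! hno
  refine hU.not_gt (card_lt_of_cliqueFreeOn_inf (R := R) hb hbk hs hns
    (fun y hy t ht => hR y (hKV hy) (ht.trans (coe_subset.mpr hUA))) fun B hB A' hA'U hA' => ?_)
  obtain ⟨hBK, hBb⟩ := mem_powersetCard.mp hB
  obtain ⟨x, hx, hxB⟩ := hno A' ((coe_subset.mp hA'U).trans hUA) B (hBK.trans hKV) hA'.card_eq hBb
    fun y hy => hA'.isClique.mono (inf_le hy)
  exact hxB ((hK x (hA'U hx)).subset (coe_subset.mpr hBK))

/-- The graph of red edges of a coloring `χ`, red being `true`. -/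
def redGraph {V : Type*} (χ : Sym2 V → Bool) : SimpleGraph V :=
  SimpleGraph.fromEdgeSet {e | χ e = true}

/-- The red graph on the row at height `y` of a colored grid. -/
def rowGraph (χ : Sym2 (α × β) → Bool) (y : β) : SimpleGraph α :=
  (redGraph χ).comap (Function.Embedding.sectL α y)

/-- The red graph on the column at position `x` of a colored grid. -/
def colGraph (χ : Sym2 (α × β) → Bool) (x : α) : SimpleGraph β :=
  (redGraph χ).comap (Function.Embedding.sectR x β)

lemma redGraph_adj {V : Type*} (χ : Sym2 V → Bool) (v w : V) :
    (redGraph χ).Adj v w ↔ χ s(v, w) = true ∧ v ≠ w := by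
  simp [redGraph]

lemma rowGraph_adj (χ : Sym2 (α × β) → Bool) (y : β) (x x' : α) :
    (rowGraph χ y).Adj x x' ↔ χ s((x, y), (x', y)) = true ∧ x ≠ x' := by
  simp [rowGraph, redGraph_adj]

lemma colGraph_adj (χ : Sym2 (α × β) → Bool) (x : α) (y y' : β) :
    (colGraph χ x).Adj y y' ↔ χ s((x, y), (x, y')) = true ∧ y ≠ y' := by
  simp [colGraph, redGraph_adj]

lemma exists_rowGraph_eq_and_colGraph_eq (R : β → SimpleGraph α) (C : α → SimpleGraph β) :
    ∃ χ : Sym2 (α × β) → Bool, rowGraph χ = R ∧ colGraph χ = C := by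
  let G := SimpleGraph.fromRel fun p q : α × β =>
    (p.2 = q.2 ∧ (R p.2).Adj p.1 q.1) ∨ (p.1 = q.1 ∧ (C p.1).Adj p.2 q.2)
  refine ⟨fun e => decide (e ∈ G.edgeSet), ?_, ?_⟩
  · ext y x x'
    simp only [rowGraph_adj, G, decide_eq_true_eq, SimpleGraph.mem_edgeSet,
      SimpleGraph.fromRel_adj, SimpleGraph.irrefl]
    grind [SimpleGraph.adj_comm, SimpleGraph.Adj.ne]
  · ext x y y'
    simp only [colGraph_adj, G, decide_eq_true_eq, SimpleGraph.mem_edgeSet,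
      SimpleGraph.fromRel_adj]
    grind [SimpleGraph.adj_comm, SimpleGraph.Adj.ne]

lemma indepSetFree_comap {V W : Type*} {G : SimpleGraph V} {f : W ↪ V} {n : ℕ} :
    (G.comap f).IndepSetFree n ↔ G.IndepSetFreeOn (Set.range f) n := by
  have himage : ∀ T : Finset W,
      (G.comap f).IsNIndepSet n T ↔ G.IsNIndepSet n (T.map f) := fun T => by
    simp only [SimpleGraph.isNIndepSet_iff, SimpleGraph.isIndepSet_iff, coe_map, card_map,
      f.injective.injOn.pairwise_image]
    rfl
  refine ⟨fun h S hS hSn => ?_, fun h T hT => h (by simp) ((himage T).mp hT)⟩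
  obtain ⟨T, hT⟩ : ∃ T : Finset W, T.map f = S := by
    obtain ⟨T, -, hT⟩ := subset_set_image_iff.mp (Set.image_univ ▸ hS)
    exact ⟨T, by rwa [map_eq_image]⟩
  exact h T ((himage T).mpr (hT ▸ hSn))

lemma forall_fst_eq_or_forall_snd_eq {S : Finset (α × β)} (hS : S.Nonempty)
    (hline : ∀ p ∈ S, ∀ q ∈ S, p.1 = q.1 ∨ p.2 = q.2) :
    (∃ x, ∀ p ∈ S, p.1 = x) ∨ ∃ y, ∀ p ∈ S, p.2 = y := by
  obtain ⟨p, hp⟩ := hS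
  by_cases hrow : ∀ q ∈ S, q.2 = p.2
  · exact Or.inr ⟨p.2, hrow⟩
  push Not at hrow
  obtain ⟨q, hq, hqp⟩ := hrow
  exact Or.inl ⟨p.1, fun r hr => by grind⟩

/-- The partition relation `Γ_{N,N} → (Γ_{a,b}, K_n)`; `gridRamsey a b n` is the least such `N`. -/
def GridArrows (a b n N : ℕ) : Prop :=
  ∀ χ : Sym2 (Fin N × Fin N) → Bool, HasRedSubgrid N a b χ ∨ HasBlueGridClique N n χ

lemma hasRedSubgrid_iff {N a b : ℕ} {χ : Sym2 (Fin N × Fin N) → Bool} :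
    HasRedSubgrid N a b χ ↔ ∃ A B : Finset (Fin N), #A = a ∧ #B = b ∧
      (∀ y ∈ B, (rowGraph χ y).IsClique A) ∧ ∀ x ∈ A, (colGraph χ x).IsClique B := by
  simp only [HasRedSubgrid, SimpleGraph.isClique_iff, Set.Pairwise, rowGraph_adj, colGraph_adj,
    mem_coe]
  grind

lemma not_hasBlueGridClique_iff {N n : ℕ} {χ : Sym2 (Fin N × Fin N) → Bool} (hn : 0 < n) :
    ¬ HasBlueGridClique N n χ ↔
      (∀ y, (rowGraph χ y).IndepSetFree n) ∧ ∀ x, (colGraph χ x).IndepSetFree n := by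
  have hblue : HasBlueGridClique N n χ ↔ ∃ S : Finset (Fin N × Fin N),
      (redGraph χ).IsNIndepSet n S ∧ ∀ p ∈ S, ∀ q ∈ S, p.1 = q.1 ∨ p.2 = q.2 := by
    simp only [HasBlueGridClique, SimpleGraph.isNIndepSet_iff, SimpleGraph.isIndepSet_iff,
      Set.Pairwise, redGraph_adj, mem_coe, GridAdj]
    grind
  simp only [rowGraph, colGraph, indepSetFree_comap, hblue]
  constructor
  · intro h
    refine ⟨fun y S hSy hS => h ⟨S, hS, fun p hp q hq => Or.inr ?_⟩,
      fun x S hSx hS => h ⟨S, hS, fun p hp q hq => Or.inl ?_⟩⟩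
    · obtain ⟨⟨_, rfl⟩, ⟨_, rfl⟩⟩ := And.intro (hSy hp) (hSy hq)
      rfl
    · obtain ⟨⟨_, rfl⟩, ⟨_, rfl⟩⟩ := And.intro (hSx hp) (hSx hq)
      rfl
  · rintro ⟨hrow, hcol⟩ ⟨S, hS, hline⟩
    obtain ⟨x, hx⟩ | ⟨y, hy⟩ :=
      forall_fst_eq_or_forall_snd_eq (card_pos.mp (hS.card_eq ▸ hn)) hline
    · exact hcol x (fun p hp => ⟨p.2, by simp [← hx p hp]⟩) hS
    · exact hrow y (fun p hp => ⟨p.1, by simp [← hy p hp]⟩) hS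

lemma gridArrows_iff {a b n N : ℕ} (hn : 0 < n) :
    GridArrows a b n N ↔ ∀ R C : Fin N → SimpleGraph (Fin N),
      (∀ y, (R y).IndepSetFree n) → (∀ x, (C x).IndepSetFree n) →
      ∃ A B : Finset (Fin N), #A = a ∧ #B = b ∧
        (∀ y ∈ B, (R y).IsClique A) ∧ ∀ x ∈ A, (C x).IsClique B := by
  constructor
  · intro h R C hR hC
    obtain ⟨χ, rfl, rfl⟩ := exists_rowGraph_eq_and_colGraph_eq R C
    exact hasRedSubgrid_iff.mp ((h χ).resolve_right ((not_hasBlueGridClique_iff hn).mpr ⟨hR, hC⟩))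
  · intro h χ
    rw [or_iff_not_imp_right, not_hasBlueGridClique_iff hn, hasRedSubgrid_iff]
    exact fun hblue => h _ _ hblue.1 hblue.2

theorem gridArrows_of_le {a b n s k N : ℕ} (hb : 0 < b) (hbk : b < k) (hs : 2 ≤ s) (hn : 0 < n)
    (hns : 16 * n * b ≤ s * (k - b))
    (hN : n ^ (k * k) * (((k * k.choose b) ^ (k.choose b * a) * (4 * n ^ s)) ^ b *
      (b + 1) ^ (a + b * s)) ≤ N) :
    GridArrows a b n N := by
  set m := ((k * k.choose b) ^ (k.choose b * a) * (4 * n ^ s)) ^ b * (b + 1) ^ (a + b * s)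
  have hm : 0 < m := by
    have := Nat.choose_pos hbk.le
    have : 0 < k := by omega
    positivity
  have hkN : n ^ k ≤ N :=
    calc n ^ k ≤ n ^ (k * k) := Nat.pow_le_pow_right hn (Nat.le_mul_self k)
      _ ≤ N := (Nat.le_mul_of_pos_right _ hm).trans hN
  obtain ⟨V, hV⟩ := exists_subset_card_eq (s := (univ : Finset (Fin N))) (by simpa using hkN)
  refine (gridArrows_iff hn).mpr fun R C hR hC => ?_
  have : NeZero N := ⟨(Nat.pow_pos hn |>.trans_le hkN).ne'⟩
  obtain ⟨A, -, B, -, hAB⟩ := exists_clique_subgrid (R := R) (C := C) (A := univ) (V := V) (a := a)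
    hb hbk hs hns univ_nonempty hV.2.ge (fun y _ t _ => hR y t) (fun x _ t _ => hC x t) (by
      rw [hV.2, card_univ, Fintype.card_fin]
      refine le_trans ?_ hN
      gcongr
      exact (Nat.choose_le_pow _ _).trans_eq (pow_mul n k k).symm)
  exact ⟨A, B, hAB⟩

end Grid

section UpperBound

lemma gridArrows_pow {a b n s k : ℕ} (hb : 0 < b) (hbk : b < k) (hs : 2 ≤ s) (hn : 4 ≤ n)
    (hbn : b + 1 ≤ n) (hkn : k ≤ n ^ 2) (hns : 16 * n * b ≤ s * (k - b)) :
    GridArrows a b n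
      (n ^ (k * k + ((2 * (b + 1) * (k ^ b * a) + (s + 1)) * b + (a + b * s)))) := by
  have hn0 : 0 < n := by omega
  refine gridArrows_of_le hb hbk hs hn0 hns ?_
  have hX : k * k.choose b ≤ n ^ (2 * (b + 1)) :=
    calc k * k.choose b ≤ k * k ^ b := by gcongr; exact Nat.choose_le_pow k b
      _ = k ^ (b + 1) := (pow_succ' k b).symm
      _ ≤ n ^ (2 * (b + 1)) := by rw [pow_mul]; gcongr
  have hpow : (k * k.choose b) ^ (k.choose b * a) ≤ n ^ (2 * (b + 1) * (k ^ b * a)) :=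
    calc (k * k.choose b) ^ (k.choose b * a) ≤ (n ^ (2 * (b + 1))) ^ (k ^ b * a) := by
          refine (Nat.pow_le_pow_left hX _).trans (Nat.pow_le_pow_right (by positivity) ?_)
          gcongr
          exact Nat.choose_le_pow k b
      _ = n ^ (2 * (b + 1) * (k ^ b * a)) := (pow_mul _ _ _).symm
  have hfour : 4 * n ^ s ≤ n ^ (s + 1) := by rw [pow_succ']; gcongr
  calc n ^ (k * k) * (((k * k.choose b) ^ (k.choose b * a) * (4 * n ^ s)) ^ b *
        (b + 1) ^ (a + b * s))
      ≤ n ^ (k * k) * ((n ^ (2 * (b + 1) * (k ^ b * a)) * n ^ (s + 1)) ^ b *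
        n ^ (a + b * s)) := by gcongr
    _ = _ := by rw [← pow_add n, ← pow_mul, ← pow_add, ← pow_add]

lemma exists_parameters {b n : ℕ} {t : ℝ} (hb : 0 < b) (ht : 1 < t) (htn : t ^ (b + 1) = n) :
    ∃ s k : ℕ, 2 ≤ s ∧ b < k ∧ 16 * n * b ≤ s * (k - b) ∧ (s : ℝ) ≤ 2 * t ^ b ∧
      (k : ℝ) ≤ 33 * b * t := by
  have htb : 1 < t ^ b := one_lt_pow₀ ht hb.ne'
  have hceil : ∀ x : ℝ, 1 < x → (⌈x⌉₊ : ℝ) ≤ 2 * x := fun x hx => by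
    linarith [Nat.ceil_lt_add_one (zero_le_one.trans hx.le)]
  refine ⟨⌈t ^ b⌉₊, b + 16 * b * ⌈t⌉₊, ?_, ?_, ?_, hceil _ htb, ?_⟩
  · exact Nat.lt_ceil.mpr (by simpa using htb)
  · simpa using ⟨hb, zero_lt_one.trans ht⟩
  · have hprod : (n : ℝ) ≤ ⌈t ^ b⌉₊ * ⌈t⌉₊ := by
      rw [← htn, pow_succ]
      gcongr <;> exact Nat.le_ceil _
    have hprod' : n ≤ ⌈t ^ b⌉₊ * ⌈t⌉₊ := by exact_mod_cast hprod
    calc 16 * n * b ≤ 16 * (⌈t ^ b⌉₊ * ⌈t⌉₊) * b := by gcongr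
      _ = ⌈t ^ b⌉₊ * (b + 16 * b * ⌈t⌉₊ - b) := by rw [Nat.add_sub_cancel_left]; ring
  · push_cast
    have := mul_le_mul_of_nonneg_left (hceil t ht) (Nat.cast_nonneg (α := ℝ) b)
    have := mul_le_mul_of_nonneg_left ht.le (Nat.cast_nonneg (α := ℝ) b)
    linarith

lemma exists_exponent_le (a : ℕ) {b : ℕ} (hb : 2 ≤ b) :
    ∃ c : ℝ, 0 < c ∧ ∀ (t : ℝ) (s k : ℕ), 1 ≤ t → (s : ℝ) ≤ 2 * t ^ b → (k : ℝ) ≤ 33 * b * t →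
      ((k * k + ((2 * (b + 1) * (k ^ b * a) + (s + 1)) * b + (a + b * s)) : ℕ) : ℝ) ≤
        c * t ^ b := by
  refine ⟨(33 * b) ^ 2 + ((2 * (b + 1) * ((33 * b) ^ b * a) + 3) * b + (a + b * 2)),
    by positivity, fun t s k ht hs hk => ?_⟩
  have htb : 1 ≤ t ^ b := one_le_pow₀ ht
  have hkk : (k : ℝ) * k ≤ (33 * b) ^ 2 * t ^ b :=
    calc (k : ℝ) * k = (k : ℝ) ^ 2 := (sq _).symm
      _ ≤ (33 * b * t) ^ 2 := by gcongr
      _ = (33 * b) ^ 2 * t ^ 2 := mul_pow _ _ _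
      _ ≤ (33 * b) ^ 2 * t ^ b := by gcongr
  have hkb : (k : ℝ) ^ b ≤ (33 * b) ^ b * t ^ b := by
    rw [← mul_pow]
    gcongr
  push_cast
  calc (k : ℝ) * k + ((2 * (b + 1) * ((k : ℝ) ^ b * a) + (s + 1)) * b + (a + b * s))
      ≤ (33 * b) ^ 2 * t ^ b + ((2 * (b + 1) * ((33 * b) ^ b * t ^ b * a) +
          (2 * t ^ b + t ^ b)) * b + (a * t ^ b + b * (2 * t ^ b))) := by
        gcongr
        exact le_mul_of_one_le_right (Nat.cast_nonneg a) htb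
    _ = _ := by ring

lemma natCast_pow_eq_two_rpow {n : ℕ} (hn : 0 < n) (e : ℕ) :
    ((n ^ e : ℕ) : ℝ) = 2 ^ (e * Real.logb 2 n) := by
  rw [mul_comm, Real.rpow_mul zero_le_two, Real.rpow_logb two_pos (by norm_num) (by positivity),
    Real.rpow_natCast, Nat.cast_pow]

theorem exists_gridArrows_le (a : ℕ) {b : ℕ} (hb : 2 ≤ b) :
    ∃ c : ℝ, 0 < c ∧ ∀ n : ℕ, 33 * b ≤ n → ∃ N, GridArrows a b n N ∧
      (N : ℝ) ≤ 2 ^ (c * (n : ℝ) ^ (1 - ((b : ℝ) + 1)⁻¹) * Real.logb 2 n) := by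
  obtain ⟨c, hc, hexp⟩ := exists_exponent_le a hb
  refine ⟨c, hc, fun n hn => ?_⟩
  have hn1 : (1 : ℝ) < n := by exact_mod_cast (by omega : 1 < n)
  have hn0 : (0 : ℝ) ≤ n := n.cast_nonneg
  obtain ⟨t, htdef⟩ : ∃ t : ℝ, t = (n : ℝ) ^ (((b + 1 : ℕ) : ℝ)⁻¹) := ⟨_, rfl⟩
  have ht : 1 < t := htdef ▸ Real.one_lt_rpow hn1 (by positivity)
  have htn : t ^ (b + 1) = n := htdef ▸ Real.rpow_inv_natCast_pow hn0 b.succ_ne_zero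
  have htb : t ^ b = (n : ℝ) ^ (1 - ((b : ℝ) + 1)⁻¹) := by
    rw [htdef, ← Real.rpow_natCast, ← Real.rpow_mul hn0]
    congr 1
    push_cast
    field_simp
    ring
  obtain ⟨s, k, hs2, hbk, hns, hs, hk⟩ := exists_parameters (by omega) ht htn
  have hkn : k ≤ n ^ 2 := by
    have htle : t ≤ n := htn ▸ le_self_pow₀ ht.le b.succ_ne_zero
    have hbn : 33 * (b : ℝ) ≤ n := by exact_mod_cast hn
    have : (k : ℝ) ≤ (n : ℝ) ^ 2 := hk.trans (by rw [sq]; gcongr)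
    exact_mod_cast this
  refine ⟨_, gridArrows_pow (by omega) hbk hs2 (by omega) (by omega) hkn hns, ?_⟩
  rw [natCast_pow_eq_two_rpow (by omega), ← htb]
  gcongr
  · exact one_le_two
  · exact Real.logb_nonneg one_lt_two hn1.le
  · exact hexp t s k ht.le hs hk

end UpperBound

section RandomLabelling

lemma card_filter_forall_mem_le {ι Ω : Type*} [Fintype ι] [Fintype Ω] (E : Finset ι)
    (bad : ι → Finset Ω) {δ : ℝ} (hbad : ∀ e ∈ E, (#(bad e) : ℝ) ≤ δ * Fintype.card Ω) :
    (#{ω : ι → Ω | ∀ e ∈ E, ω e ∈ bad e} : ℝ) ≤ δ ^ #E * Fintype.card (ι → Ω) := by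
  have hpi : ({ω | ∀ e ∈ E, ω e ∈ bad e} : Finset (ι → Ω)) =
      Fintype.piFinset fun e => if e ∈ E then bad e else univ := by
    ext ω
    simp only [mem_filter, mem_univ, true_and, Fintype.mem_piFinset]
    exact forall_congr' fun e => by split_ifs with he <;> simp [he]
  calc (#{ω : ι → Ω | ∀ e ∈ E, ω e ∈ bad e} : ℝ)
      = ∏ e, (#(if e ∈ E then bad e else univ) : ℝ) := by
        rw [hpi, Fintype.card_piFinset, Nat.cast_prod]
    _ ≤ ∏ e, (if e ∈ E then δ else 1) * Fintype.card Ω := by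
        refine prod_le_prod (fun _ _ => Nat.cast_nonneg _) fun e _ => ?_
        split_ifs with he
        · exact hbad e he
        · simp
    _ = δ ^ #E * Fintype.card (ι → Ω) := by
        rw [prod_mul_distrib]
        simp

lemma exists_forall_exists_notMem {ι κ Ω : Type*} [Finite ι] [Fintype Ω] [Nonempty Ω]
    (J : Finset κ) (E : κ → Finset ι) (bad : κ → ι → Finset Ω) {δ : ℝ} {m : ℕ}
    (hE : ∀ j ∈ J, #(E j) = m)
    (hbad : ∀ j ∈ J, ∀ e ∈ E j, (#(bad j e) : ℝ) ≤ δ * Fintype.card Ω) (hδ : #J * δ ^ m < 1) :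
    ∃ ω : ι → Ω, ∀ j ∈ J, ∃ e ∈ E j, ω e ∉ bad j e := by
  have := Fintype.ofFinite ι
  by_contra! hall
  have hcover : (univ : Finset (ι → Ω)) ⊆ J.biUnion fun j => {ω | ∀ e ∈ E j, ω e ∈ bad j e} := by
    intro ω _
    obtain ⟨j, hj, hω⟩ := hall ω
    exact mem_biUnion.mpr ⟨j, hj, by simpa using hω⟩
  have hcard : (Fintype.card (ι → Ω) : ℝ) ≤ #J * δ ^ m * Fintype.card (ι → Ω) :=
    calc (Fintype.card (ι → Ω) : ℝ)
        ≤ ∑ j ∈ J, (#{ω : ι → Ω | ∀ e ∈ E j, ω e ∈ bad j e} : ℝ) := by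
          exact_mod_cast (card_le_card hcover).trans card_biUnion_le
      _ ≤ ∑ _j ∈ J, δ ^ m * Fintype.card (ι → Ω) := sum_le_sum fun j hj => by
          simpa only [hE j hj] using card_filter_forall_mem_le (E j) (bad j) (hbad j hj)
      _ = #J * δ ^ m * Fintype.card (ι → Ω) := by rw [sum_const, nsmul_eq_mul, mul_assoc]
  have hpos : (0 : ℝ) < Fintype.card (ι → Ω) := Nat.cast_pos.mpr Fintype.card_pos
  nlinarith

theorem exists_labelling_indepSetFree {V Y Ω : Type*} [Fintype V] [Fintype Y] [Fintype Ω]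
    [Nonempty Ω] (good : Y → Sym2 V → Set Ω) {n D : ℕ}
    (hgood : ∀ y e, ¬ e.IsDiag → Fintype.card Ω ≤ D * #{z | z ∈ good y e})
    (hcard : Fintype.card Y * (Fintype.card V : ℝ) ^ n * (1 - 1 / D) ^ n.choose 2 < 1) :
    ∃ ω : Sym2 V → Ω, ∀ y,
      (SimpleGraph.fromEdgeSet {e | ω e ∈ good y e}).IndepSetFree n := by
  have hD : (0 : ℝ) ≤ 1 - 1 / D := by
    rw [one_div, sub_nonneg]
    exact Nat.cast_inv_le_one D
  obtain ⟨ω, hω⟩ := exists_forall_exists_notMem (Ω := Ω) (univ ×ˢ (univ : Finset V).powersetCard n)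
    (fun j : Y × Finset V => j.2.offDiag.image Sym2.mk.uncurry)
    (fun j e => univ.filter fun z => z ∉ good j.1 e)
    (δ := 1 - 1 / D) (m := n.choose 2)
    (fun j hj => by
      rw [Sym2.card_image_offDiag, (mem_powersetCard.mp (mem_product.mp hj).2).2])
    (fun j _ e he => by
      have hdiag : ¬ e.IsDiag := by
        obtain ⟨⟨x, x'⟩, hx, rfl⟩ := mem_image.mp he
        exact (mem_offDiag.mp hx).2.2
      have hsum : (#{z | z ∈ good j.1 e} : ℝ) + #{z | z ∉ good j.1 e} = Fintype.card Ω := by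
        exact_mod_cast card_filter_add_card_filter_not (s := univ) (· ∈ good j.1 e)
      have hdiv : (Fintype.card Ω : ℝ) / D ≤ #{z | z ∈ good j.1 e} :=
        div_le_of_le_mul₀ (by positivity) (by positivity)
          (by rw [mul_comm]; exact_mod_cast hgood j.1 e hdiag)
      rw [sub_mul, one_mul, one_div_mul_eq_div]
      linarith)
    (by
      rw [card_product, card_powersetCard, card_univ, card_univ]
      refine lt_of_le_of_lt ?_ hcard
      gcongr
      exact_mod_cast Nat.mul_le_mul_left _ (Nat.choose_le_pow _ _))
  refine ⟨ω, fun y S hS => ?_⟩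
  obtain ⟨e, he, hgood⟩ := hω (y, S)
    (mem_product.mpr ⟨mem_univ _, mem_powersetCard.mpr ⟨subset_univ _, hS.card_eq⟩⟩)
  obtain ⟨⟨x, x'⟩, hx, rfl⟩ := mem_image.mp he
  obtain ⟨hxS, hxS', hne⟩ := mem_offDiag.mp hx
  have hred : ω s(x, x') ∈ good y s(x, x') :=
    not_not.mp fun h => hgood (mem_filter.mpr ⟨mem_univ _, h⟩)
  exact hS.isIndepSet hxS hxS' hne ⟨hred, hne⟩

end RandomLabelling

section Code

lemma exists_polynomial_code {α K : Type*} [Fintype α] [Field K] [Fintype K] {k : ℕ}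
    (hα : Fintype.card α ≤ Fintype.card K ^ k) :
    ∃ F : α → K → K, ∀ x x', x ≠ x' → #{i | F x i = F x' i} ≤ k := by
  obtain ⟨e⟩ := Function.Embedding.nonempty_of_card_le (β := Fin k → K) (by simpa using hα)
  let P : α → Polynomial.degreeLT K k := fun x => (Polynomial.degreeLTEquiv K k).symm (e x)
  have hP : Function.Injective P := (LinearEquiv.injective _).comp e.injective
  have hdeg : ∀ x, (P x : Polynomial K).degree < k := fun x => Polynomial.mem_degreeLT.mp (P x).2
  refine ⟨fun x i => (P x : Polynomial K).eval i, fun x x' hne => ?_⟩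
  by_contra! hagree
  refine hne (hP (Subtype.ext (Polynomial.eq_of_degrees_lt_of_eval_finset_eq
    {i | (P x : Polynomial K).eval i = (P x' : Polynomial K).eval i}
    ((hdeg x).trans (by exact_mod_cast hagree)) ((hdeg x').trans (by exact_mod_cast hagree))
    fun i hi => by simpa using hi)))

lemma card_le_two_pow_mul_card_agree {I : Type*} [Fintype I] {k : ℕ} {E : Finset I} (hE : #E ≤ k)
    (v : I → Bool) :
    Fintype.card (I → Bool) ≤ 2 ^ k * #{z : I → Bool | ∀ i ∈ E, v i = z i} := by
  have hpi : ({z | ∀ i ∈ E, v i = z i} : Finset (I → Bool)) =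
      Fintype.piFinset fun i => if i ∈ E then {v i} else univ := by
    ext z
    simp only [mem_filter, mem_univ, true_and, Fintype.mem_piFinset]
    exact forall_congr' fun i => by split_ifs with hi <;> simp [hi, eq_comm (a := v i)]
  rw [hpi, Fintype.card_piFinset]
  calc Fintype.card (I → Bool) = 2 ^ #E * 2 ^ #Eᶜ := by
        rw [← pow_add, card_add_card_compl, Fintype.card_fun, Fintype.card_bool]
    _ ≤ 2 ^ k * 2 ^ #Eᶜ := by gcongr; exact one_le_two
    _ = 2 ^ k * ∏ i, #(if i ∈ E then {v i} else univ) := by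
        simp [apply_ite card, prod_ite, filter_notMem_eq_sdiff, compl_eq_univ_sdiff]

/- Rows `y`, `y'` both red on the edge `e = xx'` force `v y` and `v y'` to coincide with the random
label of `e` wherever `F x` and `F x'` agree; columns `x`, `x'` both red on `d = yy'` make `F x` and
`F x'` agree at a coordinate separating `v y` from `v y'`. -/
theorem exists_graphs_without_rectangle {α β I Q : Type*} [Fintype α] [Fintype β] [Fintype I]
    [Nonempty I] [Fintype Q] [Nonempty Q] {F : α → I → Q} {v : β → I → Bool} {k n : ℕ}
    (hF : ∀ x x', x ≠ x' → #{i | F x i = F x' i} ≤ k) (hv : Function.Injective v)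
    (hR : Fintype.card β * (Fintype.card α : ℝ) ^ n * (1 - 1 / (2 ^ k : ℕ)) ^ n.choose 2 < 1)
    (hC : Fintype.card α * (Fintype.card β : ℝ) ^ n * (1 - 1 / Fintype.card Q) ^ n.choose 2 < 1) :
    ∃ (R : β → SimpleGraph α) (C : α → SimpleGraph β),
      (∀ y, (R y).IndepSetFree n) ∧ (∀ x, (C x).IndepSetFree n) ∧
      ∀ x x' y y', (R y).Adj x x' → (R y').Adj x x' → (C x).Adj y y' → ¬ (C x').Adj y y' := by
  obtain ⟨ω, hω⟩ := exists_labelling_indepSetFree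
    (fun y (e : Sym2 α) => {z : I → Bool | ∀ i, (e.map (F · i)).IsDiag → v y i = z i})
    (fun y e he => by
      induction e with
      | _ x x' =>
        simpa using card_le_two_pow_mul_card_agree (hF x x' he) (v y)) hR
  have hsep : ∀ d : Sym2 β, ∃ i, ¬ d.IsDiag → ¬ (d.map (v · i)).IsDiag := fun d => by
    induction d with
    | _ y y' =>
      by_cases hy : y = y'
      · simp [hy]
      · simpa [hy] using Function.ne_iff.mp (hv.ne hy)
  choose sep hsep using hsep
  obtain ⟨h, hh⟩ := exists_labelling_indepSetFree
    (fun x (d : Sym2 β) => {q : Q | F x (sep d) = q}) (D := Fintype.card Q)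
    (fun x d _ => Nat.le_mul_of_pos_right _ (card_pos.mpr ⟨F x (sep d), by simp⟩)) hC
  refine ⟨_, _, hω, hh, fun x x' y y' hy hy' hx hx' => ?_⟩
  simp only [SimpleGraph.fromEdgeSet_adj, Set.mem_ofPred_eq, Sym2.map_mk, Sym2.mk_isDiag_iff]
    at hy hy' hx hx'
  have hagree : F x (sep s(y, y')) = F x' (sep s(y, y')) := hx.1.trans hx'.1.symm
  refine hsep s(y, y') (by simpa using hx.2) ?_
  simpa using (hy.1 _ hagree).trans (hy'.1 _ hagree).symm

end Code

section LowerBound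

lemma mul_pow_mul_pow_lt_one {N n D : ℕ} {M : ℝ} (hD : 1 ≤ D) (hN : N ≤ Real.exp M)
    (hM : M * (n + 1) * D < n.choose 2) :
    (N : ℝ) * (N : ℝ) ^ n * (1 - 1 / D) ^ n.choose 2 < 1 := by
  have hD' : (0 : ℝ) < D := by exact_mod_cast hD
  have hdist : (0 : ℝ) ≤ 1 - 1 / D := by
    rw [one_div, sub_nonneg]
    exact Nat.cast_inv_le_one D
  have hexp : M * (n + 1) < n.choose 2 / D := (lt_div_iff₀ hD').mpr hM
  calc (N : ℝ) * (N : ℝ) ^ n * (1 - 1 / D) ^ n.choose 2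
      = (N : ℝ) ^ (n + 1) * (1 - 1 / D) ^ n.choose 2 := by ring
    _ ≤ Real.exp M ^ (n + 1) * Real.exp (-(1 / D)) ^ n.choose 2 := by
        gcongr
        exact Real.one_sub_le_exp_neg _
    _ = Real.exp (M * (n + 1) - n.choose 2 / D) := by
        rw [← Real.exp_nat_mul, ← Real.exp_nat_mul, ← Real.exp_add]
        push_cast
        ring_nf
    _ < 1 := Real.exp_lt_one_iff.mpr (sub_neg.mpr hexp)

lemma mul_pow_mul_pow_lt_one_of_le_two_pow {N n k D : ℕ} (hk : 2 ≤ k)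
    (hkk : k * (k + 1) ≤ 2 ^ k) (hn : 2 ^ (4 * k) ≤ n) (hD : 1 ≤ D) (hDk : D ≤ 2 ^ (k + 1))
    (hN : N ≤ 2 ^ (k * (k + 1))) :
    (N : ℝ) * (N : ℝ) ^ n * (1 - 1 / D) ^ n.choose 2 < 1 := by
  refine mul_pow_mul_pow_lt_one (M := 2 ^ k) hD ?_ ?_
  · calc (N : ℝ) ≤ 2 ^ 2 ^ k := by
          exact_mod_cast hN.trans (Nat.pow_le_pow_right two_pos hkk)
      _ ≤ Real.exp 1 ^ 2 ^ k := by
          gcongr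
          linarith [Real.add_one_le_exp (1 : ℝ)]
      _ = Real.exp (2 ^ k) := by rw [← Real.exp_nat_mul]; simp
  · rw [Nat.cast_choose_two]
    have hD' : (D : ℝ) ≤ 2 * 2 ^ k := by
      rw [← pow_succ']
      exact_mod_cast hDk
    have hk' : (4 : ℝ) ≤ 2 ^ k := by
      exact_mod_cast Nat.pow_le_pow_right two_pos hk
    have hn' : ((2 : ℝ) ^ k) ^ 4 ≤ n := by
      rw [← pow_mul, mul_comm k]
      exact_mod_cast hn
    generalize (2 : ℝ) ^ k = M at hD' hk' hn' ⊢
    have hM : 16 ≤ M ^ 2 := by nlinarith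
    have hMn : 16 * M ^ 2 ≤ n := by nlinarith
    calc M * (n + 1) * D ≤ M * (n + 1) * (2 * M) := by gcongr
      _ = 2 * M ^ 2 * (n + 1) := by ring
      _ < n * (n - 1) / 2 := by nlinarith

theorem not_gridArrows_of_le_pow {a b n k p N : ℕ} [Fact p.Prime] (ha : 2 ≤ a) (hb : 2 ≤ b)
    (hk : 2 ≤ k) (hkk : k * (k + 1) ≤ 2 ^ k) (hn : 2 ^ (4 * k) ≤ n) (hkp : 2 ^ k < p)
    (hpk : p ≤ 2 ^ (k + 1)) (hN : N ≤ p ^ k) : ¬ GridArrows a b n N := by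
  have hNk : N ≤ 2 ^ (k * (k + 1)) := by
    rw [mul_comm, pow_mul]
    exact hN.trans (Nat.pow_le_pow_left hpk k)
  obtain ⟨F, hF⟩ := exists_polynomial_code (α := Fin N) (K := ZMod p) (k := k)
    (by simpa [ZMod.card] using hN)
  obtain ⟨v⟩ : Nonempty (Fin N ↪ (ZMod p → Bool)) := by
    refine Function.Embedding.nonempty_of_card_le ?_
    rw [Fintype.card_fin, Fintype.card_fun, ZMod.card, Fintype.card_bool]
    exact hNk.trans (Nat.pow_le_pow_right two_pos (hkk.trans hkp.le))
  obtain ⟨R, C, hR, hC, hRC⟩ := exists_graphs_without_rectangle (n := n) hF v.injective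
    (by
      rw [Fintype.card_fin]
      exact mul_pow_mul_pow_lt_one_of_le_two_pow hk hkk hn Nat.one_le_two_pow
        (Nat.pow_le_pow_right two_pos k.le_succ) hNk)
    (by
      rw [Fintype.card_fin, ZMod.card]
      exact mul_pow_mul_pow_lt_one_of_le_two_pow hk hkk hn NeZero.one_le hpk hNk)
  rw [gridArrows_iff ((Nat.two_pow_pos _).trans_le hn)]
  intro harrows
  obtain ⟨A, B, rfl, rfl, hA, hB⟩ := harrows R C hR hC
  obtain ⟨x, hx, x', hx', hxx'⟩ := one_lt_card.mp ha
  obtain ⟨y, hy, y', hy', hyy'⟩ := one_lt_card.mp hb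
  exact hRC x x' y y' (hA y hy hx hx' hxx') (hA y' hy' hx hx' hxx')
    (hB x hx hy hy' hyy') (hB x' hx' hy hy' hyy')

lemma mul_succ_le_two_pow {k : ℕ} (hk : 5 ≤ k) : k * (k + 1) ≤ 2 ^ k := by
  induction k, hk using Nat.le_induction with
  | base => norm_num
  | succ k hk ih => rw [pow_succ]; nlinarith

lemma two_pow_sq_le_gridRamsey {a b n k : ℕ} (ha : 2 ≤ a) (hb : 2 ≤ b) (hk : 5 ≤ k)
    (hn : 2 ^ (4 * k) ≤ n) (hne : ∃ N, GridArrows a b n N) : 2 ^ k ^ 2 ≤ gridRamsey a b n := by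
  obtain ⟨p, hp, hkp, hpk⟩ := Nat.exists_prime_lt_and_le_two_mul (2 ^ k) (by positivity)
  have : Fact p.Prime := ⟨hp⟩
  calc 2 ^ k ^ 2 = (2 ^ k) ^ k := by rw [sq, pow_mul]
    _ ≤ p ^ k := Nat.pow_le_pow_left hkp.le k
    _ ≤ gridRamsey a b n := by
        by_contra! hlt
        exact not_gridArrows_of_le_pow ha hb (by omega) (mul_succ_le_two_pow hk) hn hkp
          (by rwa [pow_succ']) hlt.le (Nat.sInf_mem hne)

theorem two_rpow_logb_sq_le_gridRamsey {a b n : ℕ} (ha : 2 ≤ a) (hb : 2 ≤ b) (hn : 2 ^ 20 ≤ n)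
    (hne : ∃ N, GridArrows a b n N) :
    (2 : ℝ) ^ (1 / 64 * Real.logb 2 n ^ 2) ≤ gridRamsey a b n := by
  have hn0 : n ≠ 0 := by omega
  have hlog : 20 ≤ Nat.log 2 n := Nat.le_log_of_pow_le one_lt_two hn
  obtain ⟨k, hk⟩ : ∃ k, k = Nat.log 2 n / 4 := ⟨_, rfl⟩
  have hkn : 2 ^ (4 * k) ≤ n :=
    (Nat.pow_le_pow_right two_pos (by omega)).trans (Nat.pow_log_le_self 2 hn0)
  have hnk : n ≤ 2 ^ (8 * k) := (Nat.lt_pow_succ_log_self one_lt_two n).le.trans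
    (Nat.pow_le_pow_right two_pos (by omega))
  have hlogb : Real.logb 2 n ≤ 8 * k := by
    rw [Real.logb_le_iff_le_rpow one_lt_two (by positivity)]
    exact_mod_cast hnk
  have hlogb_nonneg : 0 ≤ Real.logb 2 n :=
    Real.logb_nonneg one_lt_two (by exact_mod_cast Nat.one_le_iff_ne_zero.mpr hn0)
  calc (2 : ℝ) ^ (1 / 64 * Real.logb 2 n ^ 2) ≤ 2 ^ ((k ^ 2 : ℕ) : ℝ) := by
        gcongr
        · exact one_le_two
        · push_cast
          nlinarith
    _ ≤ gridRamsey a b n := by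
        rw [Real.rpow_natCast]
        exact_mod_cast two_pow_sq_le_gridRamsey ha hb (by omega) hkn hne

lemma two_rpow_mul_logb_mono {c n s t : ℝ} (hc : 0 ≤ c) (hn : 1 ≤ n) (hst : s ≤ t) :
    (2 : ℝ) ^ (c * n ^ s * Real.logb 2 n) ≤ 2 ^ (c * n ^ t * Real.logb 2 n) := by
  have hlogb : 0 ≤ Real.logb 2 n := Real.logb_nonneg one_lt_two hn
  gcongr
  exact one_le_two

lemma inv_two_pow_sub_one_le {b : ℕ} (hb : 2 ≤ b) : ((2 : ℝ) ^ b - 1)⁻¹ ≤ ((b : ℝ) + 1)⁻¹ := by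
  have hpow : b + 2 ≤ 2 ^ b := by
    induction b, hb using Nat.le_induction with
    | base => norm_num
    | succ b hb ih => rw [pow_succ]; omega
  have hpow' : (b : ℝ) + 2 ≤ 2 ^ b := by exact_mod_cast hpow
  gcongr
  linarith

end LowerBound

end GridRamsey

theorem general_grid_ramsey_bounds_general :
    ∃ c : ℝ, 0 < c ∧ ∀ a b : ℕ, 2 ≤ a → 2 ≤ b →
      ∃ c' : ℝ, 0 < c' ∧ ∃ n₀ : ℕ, ∀ n : ℕ, n₀ ≤ n →
        (2 : ℝ) ^ (c * (Real.logb 2 n) ^ 2) ≤ (gridRamsey a b n : ℝ) ∧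
        (gridRamsey a b n : ℝ) ≤
          (2 : ℝ) ^ (c' * (n : ℝ) ^ (1 - ((b : ℝ) + 1)⁻¹) * Real.logb 2 n) := by
  refine ⟨1 / 64, by norm_num, fun a b ha hb => ?_⟩
  obtain ⟨c', hc', hupper⟩ := GridRamsey.exists_gridArrows_le a hb
  refine ⟨c', hc', max (2 ^ 20) (33 * b), fun n hn => ?_⟩
  obtain ⟨N, harrows, hN⟩ := hupper n ((le_max_right _ _).trans hn)
  have hle : gridRamsey a b n ≤ N := Nat.sInf_le harrows
  exact ⟨GridRamsey.two_rpow_logb_sq_le_gridRamsey ha hb ((le_max_left _ _).trans hn) ⟨N, harrows⟩,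
    le_trans (by exact_mod_cast hle) hN⟩

/-- There is `c > 0` and, for each `a ≥ b ≥ 2`, a `c'_a > 0` such that for all
sufficiently large `n`:
`2^(c (log₂ n)²) ≤ gr(Γ_{a,b}, K_n) ≤ 2^(c'_a n^(1 - 1/(2^b - 1)) log₂ n)`. -/
theorem general_grid_ramsey_bounds :
    ∃ c : ℝ, 0 < c ∧ ∀ a b : ℕ, 2 ≤ b → b ≤ a →
      ∃ c' : ℝ, 0 < c' ∧ ∃ n₀ : ℕ, ∀ n : ℕ, n₀ ≤ n →
        (2 : ℝ) ^ (c * (Real.logb 2 n) ^ 2) ≤ (gridRamsey a b n : ℝ) ∧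
        (gridRamsey a b n : ℝ) ≤
          (2 : ℝ) ^ (c' * (n : ℝ) ^ (1 - ((2 : ℝ) ^ b - 1)⁻¹) * Real.logb 2 n) := by
  obtain ⟨c, hc, hbounds⟩ := general_grid_ramsey_bounds_general
  refine ⟨c, hc, fun a b hb hab => ?_⟩
  obtain ⟨c', hc', n₀, hn₀⟩ := hbounds a b (hb.trans hab) hb
  refine ⟨c', hc', max n₀ 1, fun n hn => ?_⟩
  obtain ⟨hlower, hupper⟩ := hn₀ n ((le_max_left _ _).trans hn)
  exact ⟨hlower, hupper.trans (GridRamsey.two_rpow_mul_logb_mono hc'.le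
    (by exact_mod_cast (le_max_right _ _).trans hn)
    (sub_le_sub_left (GridRamsey.inv_two_pow_sub_one_le hb) 1))⟩
end

section
/- For all positive integers N and n ≥ 2: if every red/blue edge-coloring of Γ_{N,N} contains a red copy of Γ_{3,2} or a blue K_n, then every 2-coloring of K_{2N}^(3) contains a red copy of K_5^(3) − e or a blue copy of S_n. Consequently, r(K_5^(3) − e, S_n) ≤ 2·gr(Γ_{3,2}, K_n). -/
/-- A red copy of `K₅⁽³⁾ − e`: a 5-element vertex set with at least nine of its ten
3-element subsets red (red = `true`). -/
def HasRedK5e (N : ℕ) (χ : Finset (Fin N) → Bool) : Prop :=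
  ∃ S : Finset (Fin N), S.card = 5 ∧
    9 ≤ ((S.powersetCard 3).filter fun T => χ T = true).card

/-- A blue copy of the star `Sₙ` (blue = `false`). -/
def HasBlueStar (N n : ℕ) (χ : Finset (Fin N) → Bool) : Prop :=
  ∃ v : Fin N, ∃ S : Finset (Fin N), v ∉ S ∧ S.card = n ∧
    ∀ a ∈ S, ∀ b ∈ S, a ≠ b → χ {v, a, b} = false

/-- The Ramsey number `r(K₅⁽³⁾ − e, Sₙ)`. -/
noncomputable def ramseyK5eStar (n : ℕ) : ℕ :=
  sInf {N : ℕ | ∀ χ : Finset (Fin N) → Bool, HasRedK5e N χ ∨ HasBlueStar N n χ}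

/-- The grid Ramsey number `gr(Γ₃,₂, K_n)`. -/
noncomputable def gridRamsey32 (n : ℕ) : ℕ :=
  sInf {N : ℕ | ∀ χ : Sym2 (Fin N × Fin N) → Bool,
    HasRedSubgrid N 3 2 χ ∨ HasBlueGridClique N n χ}

/-! An edge `(x, y) — (x', y)` of the grid on `X × Y` becomes the triple `x, x', y` of `X ⊔ Y`, and
an edge `(x, y) — (x, y')` the triple `x, y, y'`. Colour each grid edge like its triple. In a red
`Γ₃,₂` on `A × B` the edges run through every triple of `A ⊔ B` except `A` itself, which makes
`A ⊔ B` a red `K₅⁽³⁾ − e`. A blue `K_n` lies in a single row or column, and the vertex naming that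
line is the centre of a blue `Sₙ`. The bound on `r(K₅⁽³⁾ − e, Sₙ)` then needs `gr(Γ₃,₂, K_n)` to be
attained (`sInf ∅ = 0` would break it): among many columns with a red clique on the same rows,
Ramsey's theorem is applied to these rows one after the other. -/

section Ramsey

variable {V : Type*}

theorem exists_isNClique_succ_of_subset_filter_adj {G : SimpleGraph V} [DecidableRel G.Adj]
    {S A : Finset V} {v : V} {s : ℕ} (hv : v ∈ S) (hAS : A ⊆ S.filter (G.Adj v))
    (hA : G.IsNClique s A) : ∃ B ⊆ S, G.IsNClique (s + 1) B := by
  classical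
  exact ⟨insert v A, Finset.insert_subset hv (hAS.trans (Finset.filter_subset _ _)),
    hA.insert fun _ hx => (Finset.mem_filter.1 (hAS hx)).2⟩

theorem card_le_card_filter_adj_add_card_filter_compl_adj [DecidableEq V] (G : SimpleGraph V)
    [DecidableRel G.Adj] (S : Finset V) (v : V) :
    S.card ≤ (S.filter (G.Adj v)).card + (S.filter (Gᶜ.Adj v)).card + 1 := by
  have cover : S ⊆ insert v (S.filter (G.Adj v) ∪ S.filter (Gᶜ.Adj v)) := by
    intro x hx
    simp only [Finset.mem_insert, Finset.mem_union, Finset.mem_filter, SimpleGraph.compl_adj]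
    tauto
  calc S.card ≤ (insert v (S.filter (G.Adj v) ∪ S.filter (Gᶜ.Adj v))).card :=
        Finset.card_le_card cover
    _ ≤ (S.filter (G.Adj v) ∪ S.filter (Gᶜ.Adj v)).card + 1 := Finset.card_insert_le _ _
    _ ≤ _ := Nat.succ_le_succ (Finset.card_union_le _ _)

theorem exists_isNClique_or_isNIndepSet_of_choose_le_card (G : SimpleGraph V) (s t : ℕ)
    (S : Finset V) (hS : (s + t).choose s ≤ S.card) :
    (∃ A ⊆ S, G.IsNClique s A) ∨ ∃ A ⊆ S, G.IsNIndepSet t A := by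
  classical
  simp only [← SimpleGraph.isNClique_compl]
  induction s generalizing t S with
  | zero => exact .inl ⟨∅, by simp, by simp⟩
  | succ s ihs =>
    induction t generalizing S with
    | zero => exact .inr ⟨∅, by simp, by simp⟩
    | succ t iht =>
      have pascal : (s + 1 + (t + 1)).choose (s + 1) =
          (s + (t + 1)).choose s + (s + 1 + t).choose (s + 1) := by
        rw [← add_assoc, Nat.choose_succ_succ, add_right_comm s 1 t, add_assoc]
      obtain ⟨v, hv⟩ : S.Nonempty :=
        Finset.card_pos.1 ((Nat.choose_pos (Nat.le_add_right _ _)).trans_le hS)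
      have split := card_le_card_filter_adj_add_card_filter_compl_adj G S v
      obtain hadj | hcompl : (s + (t + 1)).choose s ≤ (S.filter (G.Adj v)).card ∨
          (s + 1 + t).choose (s + 1) ≤ (S.filter (Gᶜ.Adj v)).card := by omega
      · obtain ⟨A, hAS, hA⟩ | ⟨A, hAS, hA⟩ := ihs (t + 1) _ hadj
        · exact .inl (exists_isNClique_succ_of_subset_filter_adj hv hAS hA)
        · exact .inr ⟨A, hAS.trans (Finset.filter_subset _ _), hA⟩
      · obtain ⟨A, hAS, hA⟩ | ⟨A, hAS, hA⟩ := iht _ hcompl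
        · exact .inl ⟨A, hAS.trans (Finset.filter_subset _ _), hA⟩
        · exact .inr (exists_isNClique_succ_of_subset_filter_adj hv hAS hA)

theorem exists_forall_isClique_or_exists_isNIndepSet (a n k : ℕ) :
    ∃ R : ℕ, ∀ {ι V : Type*} (G : ι → SimpleGraph V) (I : Finset ι) (S : Finset V),
      I.card = k → R ≤ S.card →
      (∃ A ⊆ S, A.card = a ∧ ∀ i ∈ I, (G i).IsClique A) ∨
        ∃ i ∈ I, ∃ A ⊆ S, (G i).IsNIndepSet n A := by
  classical
  induction k with
  | zero =>
    refine ⟨a, fun G I S hI hS => .inl ?_⟩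
    obtain ⟨A, hAS, hA⟩ := Finset.exists_subset_card_eq hS
    exact ⟨A, hAS, hA, by simp [Finset.card_eq_zero.1 hI]⟩
  | succ k ih =>
    obtain ⟨R, hR⟩ := ih
    refine ⟨(R + n).choose R, fun G I S hI hS => ?_⟩
    obtain ⟨i, J, -, rfl, hJ⟩ := Finset.card_eq_succ.1 hI
    simp only [Finset.forall_mem_insert, Finset.exists_mem_insert]
    obtain ⟨C, hCS, hC⟩ | hindep :=
      exists_isNClique_or_isNIndepSet_of_choose_le_card (G i) R n S hS
    · obtain ⟨A, hAC, hA, hclique⟩ | ⟨j, hj, A, hAC, hA⟩ := hR G J C hJ hC.card_eq.ge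
      · exact .inl ⟨A, hAC.trans hCS, hA,
          hC.isClique.subset (Finset.coe_subset.2 hAC), hclique⟩
      · exact .inr (.inr ⟨j, hj, A, hAC.trans hCS, hA⟩)
    · exact .inr (.inl hindep)

end Ramsey

section GridLines

variable {α β : Type*}

/-- The red edges in row `y` of an edge-colored grid, as a graph on the columns. An independent set
of this graph is a blue clique of the row. -/
def redRowGraph (χ : Sym2 (α × β) → Bool) (y : β) : SimpleGraph α :=
  SimpleGraph.fromEdgeSet {e | χ (e.map fun x => (x, y)) = true}

/-- The red edges in column `x` of an edge-colored grid, as a graph on the rows. An independent set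
of this graph is a blue clique of the column. -/
def redColGraph (χ : Sym2 (α × β) → Bool) (x : α) : SimpleGraph β :=
  SimpleGraph.fromEdgeSet {e | χ (e.map fun y => (x, y)) = true}

theorem redRowGraph_adj {χ : Sym2 (α × β) → Bool} {y : β} {x x' : α} :
    (redRowGraph χ y).Adj x x' ↔ χ s((x, y), (x', y)) = true ∧ x ≠ x' := by
  simp [redRowGraph]

theorem redColGraph_adj {χ : Sym2 (α × β) → Bool} {x : α} {y y' : β} :
    (redColGraph χ x).Adj y y' ↔ χ s((x, y), (x, y')) = true ∧ y ≠ y' := by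
  simp [redColGraph]

theorem isNIndepSet_redRowGraph_iff {χ : Sym2 (α × β) → Bool} {y : β} {n : ℕ} {A : Finset α} :
    (redRowGraph χ y).IsNIndepSet n A ↔
      (∀ x ∈ A, ∀ x' ∈ A, x ≠ x' → χ s((x, y), (x', y)) = false) ∧ A.card = n := by
  simp +contextual [SimpleGraph.isNIndepSet_iff, SimpleGraph.IsIndepSet, Set.Pairwise,
    redRowGraph_adj]

theorem isNIndepSet_redColGraph_iff {χ : Sym2 (α × β) → Bool} {x : α} {n : ℕ} {B : Finset β} :
    (redColGraph χ x).IsNIndepSet n B ↔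
      (∀ y ∈ B, ∀ y' ∈ B, y ≠ y' → χ s((x, y), (x, y')) = false) ∧ B.card = n := by
  simp +contextual [SimpleGraph.isNIndepSet_iff, SimpleGraph.IsIndepSet, Set.Pairwise,
    redColGraph_adj]

theorem exists_forall_fst_eq_or_exists_forall_snd_eq_of_gridAdj {m n : ℕ}
    {S : Set (Fin m × Fin n)} (hne : S.Nonempty) (hS : S.Pairwise GridAdj) :
    (∃ x, ∀ p ∈ S, p.1 = x) ∨ ∃ y, ∀ p ∈ S, p.2 = y := by
  obtain ⟨a, ha⟩ := hne
  by_cases hcol : ∀ p ∈ S, p.1 = a.1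
  · exact .inl ⟨a.1, hcol⟩
  push Not at hcol
  obtain ⟨b, hb, hba⟩ := hcol
  have agree {p q : Fin m × Fin n} (hp : p ∈ S) (hq : q ∈ S) : p.1 = q.1 ∨ p.2 = q.2 := by
    by_contra! hpq
    have := hS hp hq fun h => hpq.1 (congrArg Prod.fst h)
    simp [GridAdj, hpq] at this
  have hab : b.2 = a.2 := (agree hb ha).resolve_left hba
  refine .inr ⟨a.2, fun p hp => ?_⟩
  by_contra hpa
  have hp_a : p.1 = a.1 := (agree hp ha).resolve_right hpa
  have hp_b : p.1 = b.1 := (agree hp hb).resolve_right (hab ▸ hpa)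
  exact hba (hp_b.symm.trans hp_a)

variable {N n : ℕ} {χ : Sym2 (Fin N × Fin N) → Bool}

theorem hasBlueGridClique_of_isNIndepSet_redRowGraph {y : Fin N} {A : Finset (Fin N)}
    (hA : (redRowGraph χ y).IsNIndepSet n A) : HasBlueGridClique N n χ := by
  rw [isNIndepSet_redRowGraph_iff] at hA
  refine ⟨A ×ˢ {y}, by simp [hA.2], ?_⟩
  rintro ⟨x, z⟩ hp ⟨x', z'⟩ hq hpq
  simp only [Finset.mem_product, Finset.mem_singleton] at hp hq
  obtain ⟨⟨hx, rfl⟩, hx', rfl⟩ := And.intro hp hq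
  have hne : x ≠ x' := fun h => hpq (by rw [h])
  exact ⟨.inr ⟨hne, rfl⟩, hA.1 x hx x' hx' hne⟩

theorem hasBlueGridClique_of_isNIndepSet_redColGraph {x : Fin N} {B : Finset (Fin N)}
    (hB : (redColGraph χ x).IsNIndepSet n B) : HasBlueGridClique N n χ := by
  rw [isNIndepSet_redColGraph_iff] at hB
  refine ⟨{x} ×ˢ B, by simp [hB.2], ?_⟩
  rintro ⟨z, y⟩ hp ⟨z', y'⟩ hq hpq
  simp only [Finset.mem_product, Finset.mem_singleton] at hp hq
  obtain ⟨⟨rfl, hy⟩, rfl, hy'⟩ := And.intro hp hq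
  have hne : y ≠ y' := fun h => hpq (by rw [h])
  exact ⟨.inl ⟨rfl, hne⟩, hB.1 y hy y' hy' hne⟩

theorem HasBlueGridClique.exists_isNIndepSet (hn : n ≠ 0) (h : HasBlueGridClique N n χ) :
    (∃ y A, (redRowGraph χ y).IsNIndepSet n A) ∨ ∃ x B, (redColGraph χ x).IsNIndepSet n B := by
  obtain ⟨S, hcard, hS⟩ := h
  have hne : S.Nonempty := Finset.card_pos.1 (by omega)
  simp only [isNIndepSet_redRowGraph_iff, isNIndepSet_redColGraph_iff]
  obtain ⟨x, hx⟩ | ⟨y, hy⟩ := exists_forall_fst_eq_or_exists_forall_snd_eq_of_gridAdj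
    (S := (S : Set (Fin N × Fin N))) hne fun p hp q hq hpq => (hS p hp q hq hpq).1
  · have hmem {z} (hz : z ∈ S.image Prod.snd) : (x, z) ∈ S := by
      obtain ⟨p, hp, rfl⟩ := Finset.mem_image.1 hz
      exact hx p hp ▸ hp
    refine .inr ⟨x, S.image Prod.snd, fun y hy y' hy' hyy' => ?_, ?_⟩
    · exact (hS _ (hmem hy) _ (hmem hy') (by simpa using hyy')).2
    · rw [Finset.card_image_of_injOn, hcard]
      exact fun p hp q hq h => Prod.ext ((hx p hp).trans (hx q hq).symm) h
  · have hmem {z} (hz : z ∈ S.image Prod.fst) : (z, y) ∈ S := by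
      obtain ⟨p, hp, rfl⟩ := Finset.mem_image.1 hz
      exact hy p hp ▸ hp
    refine .inl ⟨y, S.image Prod.fst, fun x hx x' hx' hxx' => ?_, ?_⟩
    · exact (hS _ (hmem hx) _ (hmem hx') (by simpa using hxx')).2
    · rw [Finset.card_image_of_injOn, hcard]
      exact fun p hp q hq h => Prod.ext h ((hy p hp).trans (hy q hq).symm)

theorem exists_lt_card_forall_isNClique_redColGraph {b R : ℕ}
    (hN : (b + n).choose b + ((b + n).choose b).choose b * R < N)
    (hblue : ¬ HasBlueGridClique N n χ) :
    ∃ X B : Finset (Fin N), R < X.card ∧ ∀ x ∈ X, (redColGraph χ x).IsNClique b B := by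
  obtain ⟨Y, -, hY⟩ : ∃ Y ⊆ (Finset.univ : Finset (Fin N)), Y.card = (b + n).choose b :=
    Finset.exists_subset_card_eq (by rw [Finset.card_fin]; omega)
  have redClique (x : Fin N) : ∃ B ⊆ Y, (redColGraph χ x).IsNClique b B :=
    (exists_isNClique_or_isNIndepSet_of_choose_le_card _ b n Y hY.ge).resolve_right
      fun ⟨_, _, hB⟩ => hblue (hasBlueGridClique_of_isNIndepSet_redColGraph hB)
  choose f hfY hf using redClique
  obtain ⟨B, -, hB⟩ := Finset.exists_lt_card_fiber_of_mul_lt_card_of_maps_to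
    (s := Finset.univ) (t := Y.powersetCard b) (f := f) (n := R)
    (fun x _ => Finset.mem_powersetCard.2 ⟨hfY x, (hf x).card_eq⟩)
    (by rw [Finset.card_powersetCard, hY, Finset.card_fin]; omega)
  exact ⟨_, B, hB, fun x hx => (Finset.mem_filter.1 hx).2 ▸ hf x⟩

theorem exists_hasRedSubgrid_or_hasBlueGridClique (a b n : ℕ) :
    ∃ N : ℕ, ∀ χ : Sym2 (Fin N × Fin N) → Bool,
      HasRedSubgrid N a b χ ∨ HasBlueGridClique N n χ := by
  obtain ⟨R, hR⟩ := exists_forall_isClique_or_exists_isNIndepSet.{0, 0} a n b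
  refine ⟨(b + n).choose b + ((b + n).choose b).choose b * R + 1, fun χ => ?_⟩
  by_cases hblue : HasBlueGridClique _ n χ
  · exact .inr hblue
  obtain ⟨X, B, hX, hcol⟩ := exists_lt_card_forall_isNClique_redColGraph (b := b) (R := R)
    (Nat.lt_succ_self _) hblue
  obtain ⟨x, hx⟩ : X.Nonempty := Finset.card_pos.1 (by omega)
  obtain ⟨A, hAX, hA, hrow⟩ | ⟨y, -, A, -, hA⟩ :=
    hR (redRowGraph χ) B X (hcol x hx).card_eq hX.le
  · refine .inl ⟨A, B, hA, (hcol x hx).card_eq, fun x hx x' hx' y hy hne => ?_,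
      fun x hx y hy y' hy' hne => ?_⟩
    · exact (redRowGraph_adj.1 (hrow y hy hx hx' hne)).1
    · exact (redColGraph_adj.1 ((hcol x (hAX hx)).isClique hy hy' hne)).1
  · exact absurd (hasBlueGridClique_of_isNIndepSet_redRowGraph hA) hblue

end GridLines

section CrossTriples

variable {α β γ : Type*}

theorem toLeft_nonempty_and_toRight_nonempty_of_ne_map_inl {A : Finset α} {B : Finset β}
    {T : Finset (α ⊕ β)} (hT : T ⊆ A.disjSum B) (hA : A.card ≤ T.card) (hB : B.card < T.card)
    (hne : T ≠ A.map .inl) : T.toLeft.Nonempty ∧ T.toRight.Nonempty := by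
  have hsum := T.card_toLeft_add_card_toRight
  obtain ⟨hTA, hTB⟩ := Finset.subset_disjSum.1 hT
  have hcard_right := Finset.card_le_card hTB
  refine ⟨Finset.card_pos.1 (by omega), ?_⟩
  by_contra! hright
  have hleft : T.toLeft = A := Finset.eq_of_subset_of_card_le hTA (by simp_all)
  rw [← T.toLeft_disjSum_toRight, hleft, hright, Finset.disjSum_empty] at hne
  exact hne rfl

variable [DecidableEq α] [DecidableEq β]

/-- The triple of vertices of the disjoint union `α ⊕ β` encoding an edge of the grid on `α × β`:
the set of all coordinates of its two endpoints. -/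
def gridTriple (e : Sym2 (α × β)) : Finset (α ⊕ β) :=
  (e.map Prod.fst).toFinset.disjSum (e.map Prod.snd).toFinset

/-- The edge-coloring of the grid on `α × β` induced by a coloring of the triples of `γ`, where
`φ` realizes the columns and the rows as disjoint sets of vertices in `γ`. -/
def crossColoring (φ : α ⊕ β ↪ γ) (χ : Finset γ → Bool) : Sym2 (α × β) → Bool :=
  fun e => χ ((gridTriple e).map φ)

theorem gridTriple_row (x x' : α) (y : β) :
    gridTriple s((x, y), (x', y)) = ({x, x'} : Finset α).disjSum {y} := by
  simp [gridTriple, Sym2.toFinset_mk_eq]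

theorem gridTriple_col (x : α) (y y' : β) :
    gridTriple s((x, y), (x, y')) = ({x} : Finset α).disjSum {y, y'} := by
  simp [gridTriple, Sym2.toFinset_mk_eq]

theorem crossColoring_row [DecidableEq γ] (φ : α ⊕ β ↪ γ) (χ : Finset γ → Bool) (x x' : α)
    (y : β) : crossColoring φ χ s((x, y), (x', y)) = χ {φ (.inr y), φ (.inl x), φ (.inl x')} := by
  rw [crossColoring, gridTriple_row]
  congr 1
  ext z
  simp only [Finset.mem_map, Sum.exists, Finset.inl_mem_disjSum, Finset.inr_mem_disjSum,
    Finset.mem_insert, Finset.mem_singleton]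
  grind

theorem crossColoring_col [DecidableEq γ] (φ : α ⊕ β ↪ γ) (χ : Finset γ → Bool) (x : α) (y y' : β) :
    crossColoring φ χ s((x, y), (x, y')) = χ {φ (.inl x), φ (.inr y), φ (.inr y')} := by
  rw [crossColoring, gridTriple_col]
  congr 1
  ext z
  simp only [Finset.mem_map, Sum.exists, Finset.inl_mem_disjSum, Finset.inr_mem_disjSum,
    Finset.mem_insert, Finset.mem_singleton]
  grind

theorem exists_eq_gridTriple_of_card_eq_three {T : Finset (α ⊕ β)} (hT : T.card = 3)
    (hleft : T.toLeft.Nonempty) (hright : T.toRight.Nonempty) :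
    (∃ x ∈ T.toLeft, ∃ x' ∈ T.toLeft, ∃ y ∈ T.toRight,
        x ≠ x' ∧ T = gridTriple s((x, y), (x', y))) ∨
      ∃ x ∈ T.toLeft, ∃ y ∈ T.toRight, ∃ y' ∈ T.toRight,
        y ≠ y' ∧ T = gridTriple s((x, y), (x, y')) := by
  have hsum := T.card_toLeft_add_card_toRight
  have hleft_pos := hleft.card_pos
  have hright_pos := hright.card_pos
  simp only [gridTriple_row, gridTriple_col, Finset.eq_disjSum_iff]
  obtain ⟨hleft_card, hright_card⟩ | ⟨hleft_card, hright_card⟩ :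
      T.toLeft.card = 2 ∧ T.toRight.card = 1 ∨ T.toLeft.card = 1 ∧ T.toRight.card = 2 := by omega
  · obtain ⟨x, x', hne, hxx'⟩ := Finset.card_eq_two.1 hleft_card
    obtain ⟨y, hy⟩ := Finset.card_eq_one.1 hright_card
    exact .inl ⟨x, by simp [hxx'], x', by simp [hxx'], y, by simp [hy], hne, hxx', hy⟩
  · obtain ⟨x, hx⟩ := Finset.card_eq_one.1 hleft_card
    obtain ⟨y, y', hne, hyy'⟩ := Finset.card_eq_two.1 hright_card
    exact .inr ⟨x, by simp [hx], y, by simp [hyy'], y', by simp [hyy'], hne, hx, hyy'⟩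

variable {N M n : ℕ} {φ : Fin N ⊕ Fin N ↪ Fin M} {χ : Finset (Fin M) → Bool}

theorem hasRedK5e_of_hasRedSubgrid (h : HasRedSubgrid N 3 2 (crossColoring φ χ)) :
    HasRedK5e M χ := by
  obtain ⟨A, B, hA, hB, hrow, hcol⟩ := h
  have hcard : (A.disjSum B).card = 5 := by rw [Finset.card_disjSum, hA, hB]
  have red_of_ne {T : Finset (Fin N ⊕ Fin N)} (hT : T ∈ (A.disjSum B).powersetCard 3)
      (hne : T ≠ A.map .inl) : χ (T.map φ) = true := by
    obtain ⟨hTAB, hT3⟩ := Finset.mem_powersetCard.1 hT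
    obtain ⟨hTA, hTB⟩ := Finset.subset_disjSum.1 hTAB
    obtain ⟨hleft, hright⟩ := toLeft_nonempty_and_toRight_nonempty_of_ne_map_inl hTAB
      (by omega) (by omega) hne
    obtain ⟨x, hx, x', hx', y, hy, hxx', rfl⟩ | ⟨x, hx, y, hy, y', hy', hyy', rfl⟩ :=
      exists_eq_gridTriple_of_card_eq_three hT3 hleft hright
    · exact hrow x (hTA hx) x' (hTA hx') y (hTB hy) hxx'
    · exact hcol x (hTA hx) y (hTB hy) y' (hTB hy') hyy'
  refine ⟨(A.disjSum B).map φ, by rw [Finset.card_map, hcard], ?_⟩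
  rw [Finset.powersetCard_map, Finset.filter_map, Finset.card_map]
  calc 9 = ((A.disjSum B).powersetCard 3).card - 1 := by
        rw [Finset.card_powersetCard, hcard]; rfl
    _ ≤ (((A.disjSum B).powersetCard 3).erase (A.map .inl)).card := Finset.pred_card_le_card_erase
    _ ≤ _ := Finset.card_le_card fun T hT => by
        obtain ⟨hne, hT⟩ := Finset.mem_erase.1 hT
        exact Finset.mem_filter.2 ⟨hT, red_of_ne hT hne⟩

theorem hasBlueStar_of_hasBlueGridClique (hn : n ≠ 0)
    (h : HasBlueGridClique N n (crossColoring φ χ)) : HasBlueStar M n χ := by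
  obtain ⟨y, A, hA⟩ | ⟨x, B, hB⟩ := h.exists_isNIndepSet hn
  · obtain ⟨hblue, hcard⟩ := isNIndepSet_redRowGraph_iff.1 hA
    refine ⟨φ (.inr y), A.map (.trans .inl φ), by simp, by rw [Finset.card_map, hcard], ?_⟩
    simpa [crossColoring_row] using hblue
  · obtain ⟨hblue, hcard⟩ := isNIndepSet_redColGraph_iff.1 hB
    refine ⟨φ (.inl x), B.map (.trans .inr φ), by simp, by rw [Finset.card_map, hcard], ?_⟩
    simpa [crossColoring_col] using hblue

end CrossTriples

/-- For all positive `N` and `n ≥ 2`: if every red/blue edge-coloring of `Γ_{N,N}`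
contains a red `Γ₃,₂` or a blue `K_n`, then every 2-coloring of `K_{2N}^(3)` contains a
red `K₅⁽³⁾ − e` or a blue `Sₙ`. Consequently, `r(K₅⁽³⁾ − e, Sₙ) ≤ 2 · gr(Γ₃,₂, K_n)`. -/
theorem ramseyK5e_le_two_gridRamsey32 (N n : ℕ) (hN : 0 < N) (hn : 2 ≤ n) :
    ((∀ χ : Sym2 (Fin N × Fin N) → Bool,
        HasRedSubgrid N 3 2 χ ∨ HasBlueGridClique N n χ) →
      ∀ χ : Finset (Fin (2 * N)) → Bool,
        HasRedK5e (2 * N) χ ∨ HasBlueStar (2 * N) n χ) ∧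
    ramseyK5eStar n ≤ 2 * gridRamsey32 n := by
  have hn0 : n ≠ 0 := by omega
  have transfer (N : ℕ) (hgrid : ∀ χ : Sym2 (Fin N × Fin N) → Bool,
      HasRedSubgrid N 3 2 χ ∨ HasBlueGridClique N n χ) (χ : Finset (Fin (2 * N)) → Bool) :
      HasRedK5e (2 * N) χ ∨ HasBlueStar (2 * N) n χ :=
    let halves := finSumFinEquiv.trans (finCongr (two_mul N).symm)
    (hgrid (crossColoring halves.toEmbedding χ)).imp hasRedK5e_of_hasRedSubgrid
      (hasBlueStar_of_hasBlueGridClique hn0)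
  refine ⟨transfer N, ?_⟩
  have hattained := Nat.sInf_mem (exists_hasRedSubgrid_or_hasBlueGridClique 3 2 n)
  exact Nat.sInf_le (transfer (gridRamsey32 n) hattained)
end
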